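/- arXiv:1901.08318 — 2 statements merged into one kernel-verified Lean document; each statement's English description precedes it below -/
import Mathlib

section
/- Let n ≥ 1, s ≥ 2, and let Ω_1,…,Ω_s be a pseudo H-type structure of signature (0,s) on ℝ^{2n}. Let λ, μ : ℝ^s → ℂ be bounded measurable functions with λ(ϑ) + μ(ϑ) = 1 for all ϑ. Define, for ξ ∈ ℝ^{2n} and ϑ ∈ ℝ^s∖{0}, q^{λ,μ}(ξ,ϑ) := i (2π)^{−(n+s/2)} |ϑ|^{−1} ∫₀¹ (1−ρ²)^{(n−2)/2} [ λ(ϑ)·e^{i P(ξ)ρ/|ϑ|} − μ(ϑ)·e^{−i P(ξ)ρ/|ϑ|} ] dρ, and K^{λ,μ}_{0,s}(φ) := ∫_{ℝ^{2n+s}} q^{λ,μ}(ξ,ϑ)·(Fφ)(ξ,ϑ) dξ dϑ for φ ∈ 𝓢(ℝ^{2n+s}). Then K^{λ,μ}_{0,s} is a well-defined tempered distribution and is a fundamental solution of Δ_{0,s}: K^{λ,μ}_{0,s}(Δ_{0,s}φ) = φ(0) for every φ ∈ 𝓢(ℝ^{2n+s}). -/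
/-!
On the Fourier side the vector field `X_j` becomes, for each fixed `ϑ`, the first order operator
`i ξ_j − ∂_{v_j}` in `ξ` alone, where `v_j` is the `j`-th column of `Ω(ϑ)` (`FTS_XS`). Integrating
by parts twice against `e^{iaP}` and using skew-symmetry together with
`(τΩ(ϑ))² = (‖ϑ‖²/4) I`, one finds (`slice_identity`)

`∫ e^{iaP} F(Δφ)(·,ϑ) = ∫ e^{iaP} [(a²‖ϑ‖² − 1) P − i a n ‖ϑ‖²] Fφ(·,ϑ)`.

For `a = ερ/‖ϑ‖` with `ε = ±1`, the bracket times `(1−ρ²)^{(n−2)/2} e^{iaP}` is the `ρ`-derivative of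
`i ε ‖ϑ‖ (1−ρ²)^{n/2} e^{iaP}`, so its integral over `(0,1)` is `−i ε ‖ϑ‖`, independently of `ξ`
(`radial`). After exchanging the `ρ`- and `ξ`-integrals (`Jop_identity`), the combination of the two
signs with weights `λ` and `−μ` gives `−i ‖ϑ‖ (λ + μ) = −i ‖ϑ‖`, which the prefactor
`i (2π)^{−(n+s/2)} ‖ϑ‖⁻¹` of the kernel turns into the constant `(2π)^{−(n+s/2)}` (`slice_main`).
Integrating over `ϑ ≠ 0` and using Fourier inversion at the origin (`FTS_inv`) yields `φ(0)`.

The kernel is bounded by a multiple of `‖ϑ‖⁻¹`, which is locally integrable because `s ≥ 2`; this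
gives the absolute convergence of the pairing with Schwartz functions (`qlm_mul_integrable`).
-/

open MeasureTheory Filter Matrix Set
open scoped Topology Real

noncomputable section

/-- Euclidean space ℝ^d. -/
abbrev Eu (d : ℕ) : Type := EuclideanSpace ℝ (Fin d)

def toEu {d : ℕ} (v : Fin d → ℝ) : Eu d := (WithLp.equiv 2 (Fin d → ℝ)).symm v

def fromEu {d : ℕ} (x : Eu d) : Fin d → ℝ := WithLp.equiv 2 (Fin d → ℝ) x

/-- `P(x) = Σ_{j<n} x_j² − x_{n+j}²` on `ℝ^{2n}`. -/
def Pq (n : ℕ) (x : Eu (2*n)) : ℝ :=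
  ∑ j : Fin n, ((x ⟨j.1, by have := j.isLt; omega⟩)^2 - (x ⟨n + j.1, by have := j.isLt; omega⟩)^2)

/-- Second directional derivative of `f` at `x` along `v`. -/
def dir2 {d : ℕ} (f : Eu d → ℂ) (v : Eu d) (x : Eu d) : ℂ :=
  fderiv ℝ (fun y => fderiv ℝ f y v) x v

/-- The classical ultra-hyperbolic operator `L = Σ_{j<n} ∂_j² − ∂_{n+j}²` on ℝ^{2n}. -/
def Lop (n : ℕ) (f : Eu (2*n) → ℂ) (x : Eu (2*n)) : ℂ :=
  ∑ j : Fin n,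
    (dir2 f (EuclideanSpace.single ⟨j.1, by have := j.isLt; omega⟩ 1) x
      - dir2 f (EuclideanSpace.single ⟨n + j.1, by have := j.isLt; omega⟩ 1) x)

/-- The Laplace operator on ℝ^d. -/
def LapOp (d : ℕ) (f : Eu d → ℂ) : Eu d → ℂ :=
  fun x => ∑ j : Fin d, dir2 f (EuclideanSpace.single j 1) x

/-- τ = diag(I_n, −I_n) ∈ ℝ^{2n×2n}. -/
def tauM (n : ℕ) : Matrix (Fin (2*n)) (Fin (2*n)) ℝ :=
  Matrix.diagonal (fun i => if (i : ℕ) < n then 1 else -1)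

/-- `⟨η,η⟩_{r,s}` for `η ∈ ℝ^{r+s}` (the first `r` coordinates enter positively). -/
def innerSig (r : ℕ) {c : ℕ} (η : Fin c → ℝ) : ℝ :=
  ∑ k : Fin c, (if (k : ℕ) < r then (1:ℝ) else -1) * (η k)^2

/-- `Ω(η) = Σ_k η_k Ω_k`. -/
def OmegaM {n c : ℕ} (Ω : Fin c → Matrix (Fin (2*n)) (Fin (2*n)) ℝ) (η : Fin c → ℝ) :
    Matrix (Fin (2*n)) (Fin (2*n)) ℝ :=
  ∑ k, η k • Ω k

/-- A pseudo H-type structure of signature (r,s) on ℝ^{2n} (with c = r + s):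
skew-symmetric matrices with `(τΩ(η))² = −(⟨η,η⟩_{r,s}/4)·I`. -/
def IsPseudoHType (n r : ℕ) {c : ℕ} (Ω : Fin c → Matrix (Fin (2*n)) (Fin (2*n)) ℝ) : Prop :=
  (∀ k, (Ω k)ᵀ = -(Ω k)) ∧
  ∀ η : Fin c → ℝ,
    (tauM n * OmegaM Ω η)^2 = (-(innerSig r η)/4) • (1 : Matrix (Fin (2*n)) (Fin (2*n)) ℝ)

/-- The left-invariant vector field `X_j = ∂/∂x_j + Σ_{m,k} (Ω_k)_{mj} x_m ∂/∂z_k` on ℝ^{2n}×ℝ^c. -/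
def Xop {n c : ℕ} (Ω : Fin c → Matrix (Fin (2*n)) (Fin (2*n)) ℝ) (j : Fin (2*n))
    (f : Eu (2*n) × Eu c → ℂ) (p : Eu (2*n) × Eu c) : ℂ :=
  fderiv ℝ f p (EuclideanSpace.single j 1, 0)
  + ∑ m : Fin (2*n), ∑ k : Fin c,
      ((Ω k m j * p.1 m : ℝ) : ℂ) * fderiv ℝ f p (0, EuclideanSpace.single k 1)

/-- The ultra-hyperbolic operator `Δ_{r,s} = Σ_{j<n} X_j² − X_{n+j}²`. -/
def DeltaOp {n c : ℕ} (Ω : Fin c → Matrix (Fin (2*n)) (Fin (2*n)) ℝ)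
    (f : Eu (2*n) × Eu c → ℂ) (p : Eu (2*n) × Eu c) : ℂ :=
  ∑ j : Fin n,
    (Xop Ω ⟨j.1, by have := j.isLt; omega⟩ (Xop Ω ⟨j.1, by have := j.isLt; omega⟩ f) p
     - Xop Ω ⟨n + j.1, by have := j.isLt; omega⟩ (Xop Ω ⟨n + j.1, by have := j.isLt; omega⟩ f) p)

/-- The Fourier transform on ℝ^a × ℝ^b with unitary normalization. -/
def FTprod (a b : ℕ) (f : Eu a × Eu b → ℂ) (q : Eu a × Eu b) : ℂ :=
  (((2*Real.pi) ^ (-((a + b : ℝ)/2)) : ℝ) : ℂ) *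
    ∫ p : Eu a × Eu b,
      Complex.exp (-Complex.I * ((∑ i, p.1 i * q.1 i + ∑ i, p.2 i * q.2 i : ℝ) : ℂ)) * f p

/-- The inverse Fourier transform on ℝ^d with unitary normalization. -/
def FinvD (d : ℕ) (f : Eu d → ℂ) (x : Eu d) : ℂ :=
  (((2*Real.pi) ^ (-((d : ℝ)/2)) : ℝ) : ℂ) *
    ∫ ξ : Eu d, Complex.exp (Complex.I * ((∑ j, x j * ξ j : ℝ) : ℂ)) * f ξ

/-- The kernel q(ξ,ϑ). -/
def qker (n s : ℕ) (ξ : Eu (2*n)) (ϑ : Eu s) : ℂ :=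
  Complex.I * (((2*Real.pi) ^ (-((n : ℝ) + s/2)) : ℝ) : ℂ) *
    ∫ t in Set.Ioi (0:ℝ),
      Complex.exp (Complex.I * ((Real.tanh t * Pq n ξ / ‖ϑ‖ : ℝ) : ℂ))
        / ((‖ϑ‖ * (Real.cosh t)^n : ℝ) : ℂ)

/-- `K_{0,s}(f) = ∫ q(ξ,ϑ)·(Ff)(ξ,ϑ)`. -/
def K0sFun (n s : ℕ) (f : Eu (2*n) × Eu s → ℂ) : ℂ :=
  ∫ p : Eu (2*n) × Eu s, qker n s p.1 p.2 * FTprod (2*n) s f p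

/-- The kernel `q^{λ,μ}(ξ,ϑ)`. -/
def qlm (n s : ℕ) (lam mu : Eu s → ℂ) (ξ : Eu (2*n)) (ϑ : Eu s) : ℂ :=
  Complex.I * (((2*Real.pi) ^ (-((n : ℝ) + s/2)) : ℝ) : ℂ) * ((‖ϑ‖ : ℝ) : ℂ)⁻¹ *
    ∫ ρ in Set.Ioo (0:ℝ) 1,
      ((((1 - ρ^2) ^ (((n : ℝ) - 2)/2) : ℝ)) : ℂ) *
        (lam ϑ * Complex.exp (Complex.I * ((Pq n ξ * ρ / ‖ϑ‖ : ℝ) : ℂ))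
          - mu ϑ * Complex.exp (-Complex.I * ((Pq n ξ * ρ / ‖ϑ‖ : ℝ) : ℂ)))

section FundamentalSolution

open SchwartzMap LineDeriv FourierTransform
open scoped SchwartzMap

/-! ### The unitary Fourier transform on Schwartz functions -/

/-- Seen through `Measure.prod`, so that instance search recognises the volume of the product as a
Haar measure. -/
instance haarVol (a b : ℕ) : (volume : Measure (Eu a × Eu b)).IsAddHaarMeasure :=
  inferInstanceAs (((volume : Measure (Eu a)).prod (volume : Measure (Eu b))).IsAddHaarMeasure)

/-- `ℝ^a × ℝ^b` with its Euclidean (`ℓ²`) norm. The product type itself carries the sup norm, hence is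
not an inner product space, while the Fourier transform of Mathlib lives on inner product spaces. -/
abbrev Wp (a b : ℕ) := WithLp 2 (Eu a × Eu b)

/-- The identity map from the Euclidean product to the plain product. -/
def eqv (a b : ℕ) : Wp a b ≃L[ℝ] Eu a × Eu b := WithLp.prodContinuousLinearEquiv 2 ℝ (Eu a) (Eu b)

/-- The dilation `q ↦ q / (2π)`, which converts the frequency `2π⟨x, w⟩` of the Fourier transform of
Mathlib into `⟨x, ξ⟩`. -/
def scl (a b : ℕ) : (Eu a × Eu b) ≃L[ℝ] Wp a b :=
  (ContinuousLinearEquiv.smulLeft (R₁ := ℝ) (M₁ := Eu a × Eu b) (Units.mk0 ((2 * π)⁻¹ : ℝ) (by positivity))).trans (eqv a b).symm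

/-- The unitarily normalized Fourier transform as an operator on Schwartz functions of
`ℝ^a × ℝ^b`; by `FTS_apply` it is `FTprod`. -/
def FTS (a b : ℕ) : 𝓢(Eu a × Eu b, ℂ) →L[ℂ] 𝓢(Eu a × Eu b, ℂ) :=
  (((2*Real.pi) ^ (-((a + b : ℝ)/2)) : ℝ) : ℂ) •
    (compCLMOfContinuousLinearEquiv ℂ (scl a b) ∘L fourierCLM ℂ 𝓢(Wp a b, ℂ) ∘L
      compCLMOfContinuousLinearEquiv ℂ (eqv a b))

lemma FTS_def (a b : ℕ) (f : 𝓢(Eu a × Eu b, ℂ)) (q : Eu a × Eu b) :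
    FTS a b f q = (((2*Real.pi) ^ (-((a + b : ℝ)/2)) : ℝ) : ℂ) *
      𝓕 (compCLMOfContinuousLinearEquiv ℂ (eqv a b) f) (scl a b q) := rfl

lemma scl_apply (a b : ℕ) (q : Eu a × Eu b) : scl a b q = WithLp.toLp 2 ((2 * π)⁻¹ • q) := rfl
lemma eqv_apply (a b : ℕ) (q : Wp a b) : eqv a b q = q.ofLp := rfl

lemma FTS_apply (a b : ℕ) (f : 𝓢(Eu a × Eu b, ℂ)) (q : Eu a × Eu b) :
    FTS a b f q = FTprod a b f q := by
  rw [FTS_def, fourier_coe, Real.fourier_eq', FTprod]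
  congr 1
  rw [← (WithLp.volume_preserving_ofLp (Eu a) (Eu b)).integral_comp
    (MeasurableEquiv.toLp 2 (Eu a × Eu b)).symm.measurableEmbedding]
  refine integral_congr_ae (ae_of_all _ fun p => ?_)
  simp only [smul_eq_mul, compCLMOfContinuousLinearEquiv_apply, Function.comp_apply, eqv_apply]
  congr 2
  rw [scl_apply, WithLp.prod_inner_apply]
  simp only [PiLp.inner_apply, Prod.smul_fst, Prod.smul_snd, PiLp.smul_apply, RCLike.inner_apply, conj_trivial, smul_eq_mul]
  have h1 : ∀ (d : ℕ) (x y : Eu d), ∑ i, (2 * π)⁻¹ * x i * y i = (2 * π)⁻¹ * ∑ i, y i * x i := by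
    intro d x y
    rw [Finset.mul_sum]
    exact Finset.sum_congr rfl fun i _ => by ring
  rw [h1, h1]
  push_cast
  have : (π : ℂ) ≠ 0 := by exact_mod_cast Real.pi_ne_zero
  field_simp

/-- The Fourier transform turns `∂_v` into multiplication by `i⟨v, ·⟩`. -/
lemma FTS_deriv (a b : ℕ) (f : 𝓢(Eu a × Eu b, ℂ)) (v q : Eu a × Eu b) :
    FTS a b (∂_{v} f) q = Complex.I * ((inner ℝ v.1 q.1 + inner ℝ v.2 q.2 : ℝ) : ℂ) * FTS a b f q := by
  rw [FTS_def, FTS_def]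
  have h : compCLMOfContinuousLinearEquiv ℂ (eqv a b) (∂_{v} f)
      = ∂_{(WithLp.toLp 2 v : Wp a b)} (compCLMOfContinuousLinearEquiv ℂ (eqv a b) f) := by
    rw [lineDerivOp_compCLMOfContinuousLinearEquiv]; rfl
  have ht : (inner ℝ · (WithLp.toLp 2 v : Wp a b)).HasTemperateGrowth :=
    ((innerSL ℝ).flip _).hasTemperateGrowth
  rw [h, fourier_lineDerivOp_eq, _root_.smul_apply, smulLeftCLM_apply_apply ht]
  rw [scl_apply, WithLp.prod_inner_apply]
  simp only [Prod.smul_fst, Prod.smul_snd, inner_smul_left, conj_trivial, smul_eq_mul,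
    Complex.real_smul]
  rw [real_inner_comm q.1, real_inner_comm q.2]
  push_cast
  have : (π : ℂ) ≠ 0 := by exact_mod_cast Real.pi_ne_zero
  field_simp

/-- The Fourier transform turns multiplication by `⟨·, v⟩` into `i∂_v`. -/
lemma FTS_mul (a b : ℕ) (f g : 𝓢(Eu a × Eu b, ℂ)) (v q : Eu a × Eu b)
    (hg : ∀ p, g p = ((inner ℝ p.1 v.1 + inner ℝ p.2 v.2 : ℝ) : ℂ) * f p) :
    FTS a b g q = Complex.I * fderiv ℝ (FTS a b f) q v := by
  have ht : (inner ℝ · (WithLp.toLp 2 v : Wp a b)).HasTemperateGrowth :=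
    ((innerSL ℝ).flip _).hasTemperateGrowth
  have h : compCLMOfContinuousLinearEquiv ℂ (eqv a b) g
      = smulLeftCLM ℂ (inner ℝ · (WithLp.toLp 2 v : Wp a b))
        (compCLMOfContinuousLinearEquiv ℂ (eqv a b) f) := by
    ext p
    rw [smulLeftCLM_apply_apply ht, WithLp.prod_inner_apply]
    simp [hg, eqv_apply]
  rw [← lineDerivOp_apply_eq_fderiv]
  have h2 : ∂_{v} (FTS a b f) = (((2*Real.pi) ^ (-((a + b : ℝ)/2)) : ℝ) : ℂ) •
    ∂_{v} (compCLMOfContinuousLinearEquiv ℂ (scl a b) (𝓕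
      (compCLMOfContinuousLinearEquiv ℂ (eqv a b) f))) :=
    lineDerivOp_smul v (((2*Real.pi) ^ (-((a + b : ℝ)/2)) : ℝ) : ℂ)
      (compCLMOfContinuousLinearEquiv ℂ (scl a b) (𝓕 (compCLMOfContinuousLinearEquiv ℂ (eqv a b) f)))
  have h3 : scl a b v = (2 * π)⁻¹ • (WithLp.toLp 2 v : Wp a b) := rfl
  rw [h2, lineDerivOp_compCLMOfContinuousLinearEquiv, FTS_def, h, h3, lineDerivOp_left_smul,
    lineDerivOp_fourier_eq]
  simp only [_root_.smul_apply, compCLMOfContinuousLinearEquiv_apply, Function.comp_apply,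
    smul_eq_mul, Complex.real_smul, FourierTransform.fourier_smul]
  push_cast
  have : (π : ℂ) ≠ 0 := by exact_mod_cast Real.pi_ne_zero
  field_simp
  simp

/-- Fourier inversion at the origin. -/
lemma FTS_inv (a b : ℕ) (f : 𝓢(Eu a × Eu b, ℂ)) :
    (((2*Real.pi) ^ (-((a + b : ℝ)/2)) : ℝ) : ℂ) * ∫ q, FTS a b f q = f 0 := by
  set F := compCLMOfContinuousLinearEquiv ℂ (eqv a b) f with hF
  have h0 : f 0 = 𝓕⁻ (𝓕 F) 0 := by
    rw [FourierTransform.fourierInv_fourier_eq]; simp [hF]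
  have h1 : 𝓕⁻ (𝓕 F) 0 = ∫ w, 𝓕 F w := by
    rw [fourierInv_coe, Real.fourierInv_eq']; simp
  have h2 : ∫ q, FTS a b f q = (((2*Real.pi) ^ (-((a + b : ℝ)/2)) : ℝ) : ℂ) *
      ((2 * π) ^ (a + b) : ℝ) * ∫ w, 𝓕 F w := by
    simp only [FTS_def, ← hF, scl_apply, integral_const_mul, mul_assoc]
    congr 1
    have := Measure.integral_comp_inv_smul_of_nonneg (volume : Measure (Eu a × Eu b))
      (fun q => 𝓕 F (WithLp.toLp 2 q)) (R := 2 * π) (by positivity)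
    rw [this, Module.finrank_prod, finrank_euclideanSpace_fin, finrank_euclideanSpace_fin,
      Complex.real_smul]
    congr 1
    exact (WithLp.volume_preserving_toLp (Eu a) (Eu b)).integral_comp
      (MeasurableEquiv.toLp 2 (Eu a × Eu b)).measurableEmbedding _
  rw [h2, h0, h1, ← mul_assoc, ← mul_assoc, ← Complex.ofReal_mul, ← Complex.ofReal_mul,
    ← Real.rpow_add (by positivity), ← Real.rpow_natCast, ← Real.rpow_add (by positivity)]
  have : -((a + b : ℝ)/2) + -((a + b : ℝ)/2) + ((a + b : ℕ) : ℝ) = 0 := by push_cast; ring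
  rw [this]; simp

/-! ### Vector fields and their Fourier symbols -/

lemma coord_tg {a b : ℕ} (m : Fin a) :
    (fun p : Eu a × Eu b => p.1 m).HasTemperateGrowth :=
  ((EuclideanSpace.proj m : Eu a →L[ℝ] ℝ).comp (ContinuousLinearMap.fst ℝ (Eu a) (Eu b))).hasTemperateGrowth

/-- Multiplication of a Schwartz function by the coordinate `x_m` of the first factor. -/
def mulc {a b : ℕ} (m : Fin a) (f : 𝓢(Eu a × Eu b, ℂ)) : 𝓢(Eu a × Eu b, ℂ) :=
  smulLeftCLM ℂ (fun p : Eu a × Eu b => p.1 m) f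

lemma mulc_apply {a b : ℕ} (m : Fin a) (f : 𝓢(Eu a × Eu b, ℂ)) (p : Eu a × Eu b) :
    mulc m f p = (p.1 m : ℂ) * f p := by
  rw [mulc, smulLeftCLM_apply_apply (coord_tg m), Complex.real_smul]

/-- The vector field `X_j` as a map of Schwartz functions. The factor `x_m` is put inside the
derivative `∂/∂z_k`, with which it commutes; this is checked in `XS_apply`. -/
def XS {n c : ℕ} (Ω : Fin c → Matrix (Fin (2*n)) (Fin (2*n)) ℝ) (j : Fin (2*n))
    (f : 𝓢(Eu (2*n) × Eu c, ℂ)) : 𝓢(Eu (2*n) × Eu c, ℂ) :=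
  ∂_{((EuclideanSpace.single j 1, 0) : Eu (2*n) × Eu c)} f
  + ∑ m : Fin (2*n), ∑ k : Fin c,
      (Ω k m j : ℂ) • ∂_{((0, EuclideanSpace.single k 1) : Eu (2*n) × Eu c)} (mulc m f)

lemma XS_apply {n c : ℕ} (Ω : Fin c → Matrix (Fin (2*n)) (Fin (2*n)) ℝ) (j : Fin (2*n))
    (f : 𝓢(Eu (2*n) × Eu c, ℂ)) : ⇑(XS Ω j f) = Xop Ω j f := by
  ext p
  simp only [XS, Xop, _root_.add_apply, _root_.sum_apply, _root_.smul_apply, smul_eq_mul,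
    lineDerivOp_apply_eq_fderiv]
  congr 1
  refine Finset.sum_congr rfl fun m _ => Finset.sum_congr rfl fun k _ => ?_
  have h1 : ⇑(mulc m f) = fun p : Eu (2*n) × Eu c => p.1 m • f p := by
    ext p; rw [mulc_apply, Complex.real_smul]
  have h2 : HasFDerivAt (fun p : Eu (2*n) × Eu c => p.1 m)
    ((EuclideanSpace.proj m : Eu (2*n) →L[ℝ] ℝ).comp (ContinuousLinearMap.fst ℝ (Eu (2*n)) (Eu c))) p :=
    ((EuclideanSpace.proj m : Eu (2*n) →L[ℝ] ℝ).comp (ContinuousLinearMap.fst ℝ (Eu (2*n)) (Eu c))).hasFDerivAt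
  rw [h1, (h2.fun_smul (f.hasFDerivAt p)).fderiv]
  simp [mul_assoc]

/-- The diagonal entries of `τ`: `1` for the first `n` indices, `-1` for the others. -/
def sg (n : ℕ) (i : Fin (2*n)) : ℝ := if (i : ℕ) < n then 1 else -1

lemma sum_two_mul {M : Type*} [AddCommMonoid M] (n : ℕ) (f : Fin (2*n) → M) :
    ∑ i, f i = ∑ j : Fin n, (f ⟨j.1, by have := j.isLt; omega⟩ + f ⟨n + j.1, by have := j.isLt; omega⟩) := by
  rw [← (finCongr (two_mul n).symm).sum_comp, Fin.sum_univ_add, Finset.sum_add_distrib]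
  rfl

lemma Pq_eq (n : ℕ) (x : Eu (2*n)) : Pq n x = ∑ i, sg n i * x i ^ 2 := by
  rw [sum_two_mul, Pq]
  refine Finset.sum_congr rfl fun j _ => ?_
  simp [sg]; ring

/-- The ultra-hyperbolic operator `Σ_i τ_i X_i²` as a map of Schwartz functions. -/
def DS {n c : ℕ} (Ω : Fin c → Matrix (Fin (2*n)) (Fin (2*n)) ℝ)
    (f : 𝓢(Eu (2*n) × Eu c, ℂ)) : 𝓢(Eu (2*n) × Eu c, ℂ) :=
  ∑ i, (sg n i : ℂ) • XS Ω i (XS Ω i f)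

lemma DS_apply {n c : ℕ} (Ω : Fin c → Matrix (Fin (2*n)) (Fin (2*n)) ℝ)
    (f : 𝓢(Eu (2*n) × Eu c, ℂ)) : ⇑(DS Ω f) = DeltaOp Ω f := by
  ext p
  simp only [DS, _root_.sum_apply, _root_.smul_apply, smul_eq_mul, XS_apply]
  rw [sum_two_mul, DeltaOp]
  refine Finset.sum_congr rfl fun j _ => ?_
  simp [sg]; ring

lemma slice_tg (a b : ℕ) (ϑ : Eu b) : (fun ξ : Eu a => (ξ, ϑ)).HasTemperateGrowth := by
  have : (fun ξ : Eu a => (ξ, ϑ)) = fun ξ => (ContinuousLinearMap.inl ℝ (Eu a) (Eu b)) ξ + (0, ϑ) := by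
    ext ξ <;> simp
  rw [this]
  exact (ContinuousLinearMap.hasTemperateGrowth _).add (Function.HasTemperateGrowth.const _)

/-- Restriction of a Schwartz function on `ℝ^a × ℝ^b` to the slice `ℝ^a × {ϑ}`. -/
def slice {a b : ℕ} (ϑ : Eu b) : 𝓢(Eu a × Eu b, ℂ) →L[ℂ] 𝓢(Eu a, ℂ) :=
  compCLM ℂ (slice_tg a b ϑ) ⟨1, 1, fun x => by
    have := norm_fst_le (x, ϑ)
    simp only [one_mul, pow_one] at *
    linarith⟩

lemma slice_apply {a b : ℕ} (ϑ : Eu b) (f : 𝓢(Eu a × Eu b, ℂ)) (ξ : Eu a) :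
    slice ϑ f ξ = f (ξ, ϑ) := rfl

lemma slice_fderiv {a b : ℕ} (ϑ : Eu b) (f : 𝓢(Eu a × Eu b, ℂ)) (ξ v : Eu a) :
    fderiv ℝ (slice ϑ f) ξ v = fderiv ℝ f (ξ, ϑ) (v, 0) := by
  have h := (f.hasFDerivAt (ξ, ϑ)).comp ξ (hasFDerivAt_prodMk_left (𝕜 := ℝ) ξ ϑ)
  have h2 : ⇑(slice ϑ f) = ⇑f ∘ fun ξ => (ξ, ϑ) := rfl
  rw [h2, h.fderiv]
  simp

/-- The column `v_j(ϑ) = Σ_m Ω(ϑ)_{mj} e_m` of `Ω(ϑ)`. -/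
def vvec {n c : ℕ} (Ω : Fin c → Matrix (Fin (2*n)) (Fin (2*n)) ℝ) (ϑ : Eu c) (j : Fin (2*n)) : Eu (2*n) :=
  WithLp.toLp 2 fun m => OmegaM Ω ϑ.ofLp m j

/-- On the Fourier side, and on the slice at `ϑ`, the vector field `X_j` is the first order operator
`i ξ_j − ∂_{v_j(ϑ)}`: there are no `ϑ`-derivatives. -/
lemma FTS_XS {n c : ℕ} (Ω : Fin c → Matrix (Fin (2*n)) (Fin (2*n)) ℝ) (j : Fin (2*n))
    (f : 𝓢(Eu (2*n) × Eu c, ℂ)) (ξ : Eu (2*n)) (ϑ : Eu c) :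
    slice ϑ (FTS (2*n) c (XS Ω j f)) ξ
      = Complex.I * (ξ j : ℂ) * slice ϑ (FTS (2*n) c f) ξ
        - fderiv ℝ (slice ϑ (FTS (2*n) c f)) ξ (vvec Ω ϑ j) := by
  have hv : vvec Ω ϑ j = ∑ m, ∑ k, (ϑ k * Ω k m j) • (EuclideanSpace.single m (1:ℝ) : Eu (2*n)) := by
    ext i
    simp [vvec, OmegaM, Matrix.sum_apply]
    simp [Pi.single_apply]
  rw [hv]
  simp only [map_sum, map_smul, slice_fderiv, slice_apply]
  simp only [XS, map_add, map_sum, map_smul, _root_.add_apply, _root_.sum_apply, _root_.smul_apply]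
  rw [sub_eq_add_neg, ← Finset.sum_neg_distrib]
  congr 1
  · rw [FTS_deriv]
    simp [EuclideanSpace.inner_single_left]
  · refine Finset.sum_congr rfl fun m _ => ?_
    rw [← Finset.sum_neg_distrib]
    refine Finset.sum_congr rfl fun k _ => ?_
    rw [FTS_deriv, FTS_mul _ _ f (mulc m f) (EuclideanSpace.single m 1, 0)]
    · simp only [EuclideanSpace.inner_single_left, inner_zero_left, zero_add, smul_eq_mul,
        Complex.real_smul, map_one, one_mul]
      push_cast
      linear_combination (Ω k m j : ℂ) * (ϑ k : ℂ) *
        (fderiv ℝ (FTS (2*n) c f) (ξ, ϑ) (EuclideanSpace.single m 1, 0)) * Complex.I_mul_I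
    · intro p
      rw [mulc_apply]
      simp [EuclideanSpace.inner_single_right]

/-! ### Integration by parts against the oscillating exponential -/

/-- The oscillating exponential `e^{i a P(ξ)}`. -/
def Eosc (n : ℕ) (a : ℝ) (ξ : Eu (2*n)) : ℂ := Complex.exp (Complex.I * ((a * Pq n ξ : ℝ) : ℂ))

lemma Eosc_norm (n : ℕ) (a : ℝ) (ξ : Eu (2*n)) : ‖Eosc n a ξ‖ = 1 := by
  rw [Eosc, mul_comm, Complex.norm_exp_ofReal_mul_I]

/-- The linear functional `⟨τ v, ·⟩`, half of the derivative of `P` at `v`. -/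
def Blin (n : ℕ) (v : Eu (2*n)) : Eu (2*n) →L[ℝ] ℝ :=
  ∑ i, (sg n i * v i) • (EuclideanSpace.proj i : Eu (2*n) →L[ℝ] ℝ)

lemma Blin_apply (n : ℕ) (v x : Eu (2*n)) : Blin n v x = ∑ i, sg n i * v i * x i := by
  simp [Blin, _root_.sum_apply]

lemma Pq_hasFDerivAt (n : ℕ) (x : Eu (2*n)) : HasFDerivAt (Pq n) ((2:ℝ) • Blin n x) x := by
  have h : Pq n = fun x : Eu (2*n) => ∑ i, sg n i * x i ^ 2 := funext (Pq_eq n)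
  rw [h]
  have h1 : ∀ i ∈ Finset.univ, HasFDerivAt (fun x : Eu (2*n) => sg n i * x i ^ 2)
      (sg n i • ((2 * x i) • (EuclideanSpace.proj i : Eu (2*n) →L[ℝ] ℝ))) x := by
    intro i _
    have h2 : HasFDerivAt (fun x : Eu (2*n) => x i) (EuclideanSpace.proj i : Eu (2*n) →L[ℝ] ℝ) x :=
      (EuclideanSpace.proj i : Eu (2*n) →L[ℝ] ℝ).hasFDerivAt
    have := (h2.pow 2).const_mul (sg n i)
    simpa using this
  refine (HasFDerivAt.fun_sum h1).congr_fderiv ?_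
  ext v
  simp only [_root_.sum_apply, _root_.smul_apply, Blin_apply, smul_eq_mul, Finset.mul_sum]
  exact Finset.sum_congr rfl fun i _ => by simp; ring

lemma Pq_cont (n : ℕ) : Continuous (Pq n) :=
  continuous_iff_continuousAt.2 fun x => (Pq_hasFDerivAt n x).continuousAt

lemma Eosc_cont (n : ℕ) (a : ℝ) : Continuous (Eosc n a) := by
  have := Pq_cont n
  unfold Eosc; fun_prop

lemma Eosc_hasFDerivAt (n : ℕ) (a : ℝ) (x : Eu (2*n)) :
    HasFDerivAt (Eosc n a) ((2 * a : ℝ) • ((Complex.I * Eosc n a x) • (Complex.ofRealCLM.comp (Blin n x)))) x := by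
  have h1 := (Complex.ofRealCLM.hasFDerivAt (x := a * Pq n x)).comp x ((Pq_hasFDerivAt n x).const_mul a)
  have h2 := (h1.const_mul Complex.I).cexp
  refine h2.congr_fderiv ?_
  ext v
  simp [Eosc]
  ring

lemma Blin_symm (n : ℕ) (v x : Eu (2*n)) : Blin n v x = Blin n x v := by
  simp only [Blin_apply]; exact Finset.sum_congr rfl fun i _ => by ring

lemma Eosc_integrable (n : ℕ) (a : ℝ) (χ : 𝓢(Eu (2*n), ℂ)) :
    Integrable (fun ξ => Eosc n a ξ * χ ξ) :=
  χ.integrable.bdd_mul (Eosc_cont n a).aestronglyMeasurable (ae_of_all _ fun x => (Eosc_norm n a x).le)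

/-- Multiplication of a Schwartz function by a real linear functional. -/
def mulL {d : ℕ} (L : Eu d →L[ℝ] ℝ) (χ : 𝓢(Eu d, ℂ)) : 𝓢(Eu d, ℂ) := smulLeftCLM ℂ (⇑L) χ

lemma mulL_apply {d : ℕ} (L : Eu d →L[ℝ] ℝ) (χ : 𝓢(Eu d, ℂ)) (ξ : Eu d) :
    mulL L χ ξ = (L ξ : ℂ) * χ ξ := by
  rw [mulL, smulLeftCLM_apply_apply L.hasTemperateGrowth, Complex.real_smul]

lemma mulL_fderiv {d : ℕ} (L : Eu d →L[ℝ] ℝ) (χ : 𝓢(Eu d, ℂ)) (ξ v : Eu d) :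
    fderiv ℝ (mulL L χ) ξ v = (L ξ : ℂ) * fderiv ℝ χ ξ v + (L v : ℂ) * χ ξ := by
  have h1 : ⇑(mulL L χ) = fun x => L x • χ x := by
    ext x; rw [mulL_apply, Complex.real_smul]
  rw [h1, (L.hasFDerivAt.fun_smul (χ.hasFDerivAt ξ)).fderiv]
  simp

/-- The operator `χ ↦ i ℓ χ - ∂_v χ`. -/
def Yop {d : ℕ} (ℓ : Eu d →L[ℝ] ℝ) (v : Eu d) (χ : 𝓢(Eu d, ℂ)) : 𝓢(Eu d, ℂ) :=
  Complex.I • mulL ℓ χ - ∂_{v} χ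

lemma Yop_apply {d : ℕ} (ℓ : Eu d →L[ℝ] ℝ) (v : Eu d) (χ : 𝓢(Eu d, ℂ)) (ξ : Eu d) :
    Yop ℓ v χ ξ = Complex.I * (ℓ ξ : ℂ) * χ ξ - fderiv ℝ χ ξ v := by
  simp [Yop, mulL_apply, lineDerivOp_apply_eq_fderiv, mul_assoc]

/-- The adjoint of `iℓ − ∂_v` acts on `e^{iaP}` as multiplication by `i L`, where
`L = ℓ + 2a⟨τ v, ·⟩`. -/
lemma ibp_one (n : ℕ) (a : ℝ) (ℓ : Eu (2*n) →L[ℝ] ℝ) (v : Eu (2*n)) (χ : 𝓢(Eu (2*n), ℂ)) :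
    ∫ ξ, Eosc n a ξ * Yop ℓ v χ ξ
      = ∫ ξ, Eosc n a ξ * (Complex.I • mulL (ℓ + (2 * a) • Blin n v) χ) ξ := by
  have hd : ∀ ξ, fderiv ℝ (Eosc n a) ξ v = (2 * a : ℝ) * (Complex.I * Eosc n a ξ * (Blin n v ξ : ℂ)) := by
    intro ξ
    rw [(Eosc_hasFDerivAt n a ξ).fderiv, Blin_symm n v]
    simp
  have h := integral_mul_fderiv_eq_neg_fderiv_mul_of_integrable (μ := (volume : Measure (Eu (2*n))))
    (f := Eosc n a) (g := χ) (v := v) ?_ ?_ ?_ ?_ ?_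
  · have e1 : ∀ ξ, Eosc n a ξ * Yop ℓ v χ ξ = Eosc n a ξ * (Complex.I • mulL ℓ χ) ξ
        - Eosc n a ξ * fderiv ℝ χ ξ v := by
      intro ξ; rw [Yop_apply]; simp [mulL_apply]; ring
    have e2 : ∀ ξ, Eosc n a ξ * (Complex.I • mulL (ℓ + (2 * a) • Blin n v) χ) ξ =
        Eosc n a ξ * (Complex.I • mulL ℓ χ) ξ + fderiv ℝ (Eosc n a) ξ v * χ ξ := by
      intro ξ; rw [hd]; simp [mulL_apply]; ring
    simp_rw [e1, e2]
    rw [integral_sub, integral_add, h, sub_neg_eq_add]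
    · exact Eosc_integrable n a _
    · refine (Eosc_integrable n a (Complex.I • mulL ((2 * a) • Blin n v) χ)).congr (ae_of_all _ fun ξ => ?_)
      simp only [hd]; simp [mulL_apply]; ring
    · exact Eosc_integrable n a _
    · exact Eosc_integrable n a (∂_{v} χ)
  · refine (Eosc_integrable n a (Complex.I • mulL ((2 * a) • Blin n v) χ)).congr (ae_of_all _ fun ξ => ?_)
    simp only [hd]; simp [mulL_apply]; ring
  · exact Eosc_integrable n a (∂_{v} χ)
  · exact Eosc_integrable n a χ
  · exact fun x _ => (Eosc_hasFDerivAt n a x).differentiableAt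
  · exact fun x _ => χ.differentiableAt

/-- Integrating by parts twice against `e^{iaP}`: the square of `iℓ − ∂_v` becomes multiplication by
`i L(v) − L²`, where the constant comes from moving the factor `L` past `∂_v`. -/
lemma ibp_two (n : ℕ) (a : ℝ) (ℓ : Eu (2*n) →L[ℝ] ℝ) (v : Eu (2*n)) (χ : 𝓢(Eu (2*n), ℂ))
    (L : Eu (2*n) →L[ℝ] ℝ) (hL : L = ℓ + (2 * a) • Blin n v) :
    ∫ ξ, Eosc n a ξ * Yop ℓ v (Yop ℓ v χ) ξ
      = ∫ ξ, Eosc n a ξ * ((Complex.I * (L v : ℂ)) • χ - mulL L (mulL L χ)) ξ := by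
  have e1 : ∀ ξ, Eosc n a ξ * (Complex.I • mulL L (Yop ℓ v χ)) ξ =
      Complex.I * (Eosc n a ξ * Yop ℓ v (mulL L χ) ξ) + Eosc n a ξ * ((Complex.I * (L v : ℂ)) • χ) ξ := by
    intro ξ
    simp only [_root_.smul_apply, mulL_apply, Yop_apply, smul_eq_mul, mulL_fderiv]
    ring
  have e2 : ∀ ξ, Eosc n a ξ * ((Complex.I * (L v : ℂ)) • χ - mulL L (mulL L χ)) ξ =
      Complex.I * (Eosc n a ξ * (Complex.I • mulL L (mulL L χ)) ξ) + Eosc n a ξ * ((Complex.I * (L v : ℂ)) • χ) ξ := by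
    intro ξ
    simp only [_root_.smul_apply, _root_.sub_apply, mulL_apply, smul_eq_mul]
    linear_combination -(Eosc n a ξ * (L ξ : ℂ)^2 * χ ξ) * Complex.I_mul_I
  rw [ibp_one, ← hL]
  simp_rw [e1, e2]
  rw [integral_add ((Eosc_integrable n a _).const_mul _) (Eosc_integrable n a _),
    integral_add ((Eosc_integrable n a _).const_mul _) (Eosc_integrable n a _),
    integral_const_mul, integral_const_mul, ibp_one, ← hL]

/-! ### The pseudo H-type relations and the symbol on a slice -/

lemma slice_XS {n c : ℕ} (Ω : Fin c → Matrix (Fin (2*n)) (Fin (2*n)) ℝ) (j : Fin (2*n))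
    (f : 𝓢(Eu (2*n) × Eu c, ℂ)) (ϑ : Eu c) :
    slice ϑ (FTS (2*n) c (XS Ω j f))
      = Yop (EuclideanSpace.proj j) (vvec Ω ϑ j) (slice ϑ (FTS (2*n) c f)) := by
  ext ξ
  rw [FTS_XS, Yop_apply]
  rfl

lemma sg_mul_self (n : ℕ) (i : Fin (2*n)) : sg n i * sg n i = 1 := by
  unfold sg; split_ifs <;> norm_num

lemma omega_skew {n s : ℕ} {Ω : Fin s → Matrix (Fin (2*n)) (Fin (2*n)) ℝ}
    (hΩ : IsPseudoHType n 0 Ω) (ϑ : Eu s) (k l : Fin (2*n)) :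
    OmegaM Ω ϑ.ofLp k l = - OmegaM Ω ϑ.ofLp l k := by
  simp only [OmegaM, Matrix.sum_apply, Matrix.smul_apply, smul_eq_mul, ← Finset.sum_neg_distrib]
  refine Finset.sum_congr rfl fun m _ => ?_
  have := congrFun (congrFun (hΩ.1 m) l) k
  simp only [Matrix.transpose_apply, Matrix.neg_apply] at this
  rw [this]; ring

/-- The pseudo H-type relation in signature `(0,s)`, `(τΩ(ϑ))² = (‖ϑ‖²/4) I`, written as
`Ω(ϑ) τ Ω(ϑ)ᵀ = −(‖ϑ‖²/4) τ`. -/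
lemma omega_rel {n s : ℕ} {Ω : Fin s → Matrix (Fin (2*n)) (Fin (2*n)) ℝ}
    (hΩ : IsPseudoHType n 0 Ω) (ϑ : Eu s) (i l : Fin (2*n)) :
    ∑ k, sg n k * OmegaM Ω ϑ.ofLp i k * OmegaM Ω ϑ.ofLp l k
      = - (‖ϑ‖^2/4) * sg n i * (if i = l then 1 else 0) := by
  have h := congrFun (congrFun (hΩ.2 ϑ.ofLp) i) l
  have hsk : ∀ k, OmegaM Ω ϑ.ofLp k l = - OmegaM Ω ϑ.ofLp l k := fun k => omega_skew hΩ ϑ k l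
  have hn : innerSig 0 ϑ.ofLp = -‖ϑ‖^2 := by
    simp [innerSig, EuclideanSpace.norm_sq_eq]
  have ht : ∀ i k, (tauM n * OmegaM Ω ϑ.ofLp) i k = sg n i * OmegaM Ω ϑ.ofLp i k := by
    intro i k
    rw [tauM, Matrix.diagonal_mul]; rfl
  rw [pow_two, Matrix.mul_apply, hn, Matrix.smul_apply, Matrix.one_apply] at h
  simp only [ht, hsk, smul_eq_mul] at h
  have h2 : ∑ k, sg n i * OmegaM Ω ϑ.ofLp i k * (sg n k * -OmegaM Ω ϑ.ofLp l k) =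
      - sg n i * ∑ k, sg n k * OmegaM Ω ϑ.ofLp i k * OmegaM Ω ϑ.ofLp l k := by
    rw [Finset.mul_sum]; exact Finset.sum_congr rfl fun k _ => by ring
  rw [h2] at h
  linear_combination (-sg n i) * h - (∑ k, sg n k * OmegaM Ω ϑ.ofLp i k * OmegaM Ω ϑ.ofLp l k) * sg_mul_self n i

/-- The functional `L_j(ξ) = ξ_j + 2a⟨τ v_j(ϑ), ξ⟩` produced by `ibp_one` for the `j`-th vector
field. -/
def Lfun {n s : ℕ} (Ω : Fin s → Matrix (Fin (2*n)) (Fin (2*n)) ℝ) (ϑ : Eu s) (a : ℝ) (j : Fin (2*n)) :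
    Eu (2*n) →L[ℝ] ℝ :=
  EuclideanSpace.proj j + (2 * a) • Blin n (vvec Ω ϑ j)

lemma Lfun_apply {n s : ℕ} (Ω : Fin s → Matrix (Fin (2*n)) (Fin (2*n)) ℝ) (ϑ : Eu s) (a : ℝ)
    (j : Fin (2*n)) (x : Eu (2*n)) :
    Lfun Ω ϑ a j x = x j + 2 * a * ∑ m, sg n m * x m * OmegaM Ω ϑ.ofLp m j := by
  simp only [Lfun, _root_.add_apply, _root_.smul_apply, Blin_apply, smul_eq_mul]
  congr 2
  exact Finset.sum_congr rfl fun m _ => by simp only [vvec]; ring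

lemma sum_Lfun_trace {n s : ℕ} {Ω : Fin s → Matrix (Fin (2*n)) (Fin (2*n)) ℝ}
    (hΩ : IsPseudoHType n 0 Ω) (ϑ : Eu s) (a : ℝ) :
    ∑ j, sg n j * Lfun Ω ϑ a j (vvec Ω ϑ j) = - (a * n * ‖ϑ‖^2) := by
  have h0 : ∀ j, OmegaM Ω ϑ.ofLp j j = 0 := fun j => by
    have := omega_skew hΩ ϑ j j; linarith
  have h1 : ∀ j, sg n j * Lfun Ω ϑ a j (vvec Ω ϑ j) =
      ∑ m, 2 * a * sg n m * (sg n j * OmegaM Ω ϑ.ofLp m j * OmegaM Ω ϑ.ofLp m j) := by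
    intro j
    rw [Lfun_apply]
    simp only [vvec, h0, zero_add, Finset.mul_sum]
    exact Finset.sum_congr rfl fun m _ => by ring
  simp only [h1]
  rw [Finset.sum_comm]
  simp only [← Finset.mul_sum, omega_rel hΩ, if_true, mul_one]
  have h2 : ∀ i, 2 * a * sg n i * (-(‖ϑ‖ ^ 2 / 4) * sg n i) = - (a * ‖ϑ‖^2 / 2) := by
    intro i; linear_combination (- a * ‖ϑ‖^2/2) * sg_mul_self n i
  simp only [h2, Finset.sum_const, Finset.card_univ, Fintype.card_fin, nsmul_eq_mul]
  push_cast; ring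

/-- Since `Ω(ϑ)` is skew-symmetric, the cross terms cancel and only the two quadratic terms, both
multiples of `P`, remain. -/
lemma sum_Lfun_sq {n s : ℕ} {Ω : Fin s → Matrix (Fin (2*n)) (Fin (2*n)) ℝ}
    (hΩ : IsPseudoHType n 0 Ω) (ϑ : Eu s) (a : ℝ) (x : Eu (2*n)) :
    ∑ j, sg n j * (Lfun Ω ϑ a j x)^2 = (1 - a^2 * ‖ϑ‖^2) * Pq n x := by
  set M := OmegaM Ω ϑ.ofLp with hM
  have hcross : ∑ j, ∑ m, (sg n j * x j) * (sg n m * x m) * M m j = 0 := by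
    have h1 : ∑ j, ∑ m, (sg n j * x j) * (sg n m * x m) * M m j
        = - ∑ j, ∑ m, (sg n j * x j) * (sg n m * x m) * M m j := by
      conv_lhs => rw [Finset.sum_comm]
      simp only [← Finset.sum_neg_distrib]
      refine Finset.sum_congr rfl fun j _ => Finset.sum_congr rfl fun m _ => ?_
      rw [hM, omega_skew hΩ ϑ j m]; ring
    linarith
  have hsq : ∑ j, sg n j * (∑ m, sg n m * x m * M m j)^2 = - (‖ϑ‖^2/4) * Pq n x := by
    have h1 : ∀ j, sg n j * (∑ m, sg n m * x m * M m j)^2 =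
        ∑ m, ∑ l, (sg n m * x m) * (sg n l * x l) * (sg n j * M m j * M l j) := by
      intro j
      rw [pow_two, Finset.sum_mul_sum, Finset.mul_sum]
      refine Finset.sum_congr rfl fun m _ => ?_
      rw [Finset.mul_sum]
      exact Finset.sum_congr rfl fun l _ => by ring
    simp only [h1]
    rw [Finset.sum_comm, Pq_eq, Finset.mul_sum]
    refine Finset.sum_congr rfl fun m _ => ?_
    rw [Finset.sum_comm]
    simp only [← Finset.mul_sum, hM, omega_rel hΩ]
    simp only [mul_ite, mul_one, mul_zero, Finset.sum_ite_eq, Finset.mem_univ, if_true]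
    linear_combination (-(‖ϑ‖^2/4) * (x m)^2 * sg n m) * sg_mul_self n m
  have hexp : ∀ j, sg n j * (Lfun Ω ϑ a j x)^2 = sg n j * x j ^ 2
      + 4 * a * (∑ m, (sg n j * x j) * (sg n m * x m) * M m j)
      + 4 * a^2 * (sg n j * (∑ m, sg n m * x m * M m j)^2) := by
    intro j
    have : ∑ m, (sg n j * x j) * (sg n m * x m) * M m j = (sg n j * x j) * ∑ m, sg n m * x m * M m j := by
      rw [Finset.mul_sum]; exact Finset.sum_congr rfl fun m _ => by ring
    rw [Lfun_apply, this]; ring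
  simp only [hexp, Finset.sum_add_distrib, ← Finset.mul_sum, hcross, hsq, ← Pq_eq]
  ring

/-- For fixed `ϑ`, pairing `F(Δφ)(·, ϑ)` with `e^{iaP}` amounts to pairing `Fφ(·, ϑ)` with
`e^{iaP} [(a²‖ϑ‖² − 1) P − i a n ‖ϑ‖²]`. -/
lemma slice_identity {n s : ℕ} {Ω : Fin s → Matrix (Fin (2*n)) (Fin (2*n)) ℝ}
    (hΩ : IsPseudoHType n 0 Ω) (ϑ : Eu s) (a : ℝ) (φ : 𝓢(Eu (2*n) × Eu s, ℂ)) :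
    ∫ ξ, Eosc n a ξ * slice ϑ (FTS (2*n) s (DS Ω φ)) ξ
      = ∫ ξ, Eosc n a ξ * ((((a^2 * ‖ϑ‖^2 - 1) * Pq n ξ : ℝ) : ℂ) - Complex.I * ((a * n * ‖ϑ‖^2 : ℝ) : ℂ)) *
          slice ϑ (FTS (2*n) s φ) ξ := by
  set χ := slice ϑ (FTS (2*n) s φ) with hχ
  have h1 : slice ϑ (FTS (2*n) s (DS Ω φ)) = ∑ j, (sg n j : ℂ) •
      Yop (EuclideanSpace.proj j) (vvec Ω ϑ j) (Yop (EuclideanSpace.proj j) (vvec Ω ϑ j) χ) := by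
    simp only [DS, map_sum, map_smul, slice_XS, hχ]
  have h2 : ∀ ξ, Eosc n a ξ * slice ϑ (FTS (2*n) s (DS Ω φ)) ξ = ∑ j, (sg n j : ℂ) * (Eosc n a ξ *
      Yop (EuclideanSpace.proj j) (vvec Ω ϑ j) (Yop (EuclideanSpace.proj j) (vvec Ω ϑ j) χ) ξ) := by
    intro ξ
    rw [h1]
    simp only [_root_.sum_apply, _root_.smul_apply, smul_eq_mul, Finset.mul_sum]
    exact Finset.sum_congr rfl fun j _ => by ring
  simp_rw [h2]
  rw [integral_finsetSum _ fun j _ => (Eosc_integrable n a _).const_mul _]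
  simp only [integral_const_mul]
  simp only [fun j => ibp_two n a (EuclideanSpace.proj j) (vvec Ω ϑ j) χ (Lfun Ω ϑ a j) rfl]
  simp only [← integral_const_mul]
  rw [← integral_finsetSum _ fun j _ => (Eosc_integrable n a _).const_mul _]
  refine integral_congr_ae (ae_of_all _ fun ξ => ?_)
  have e1 : (((a^2 * ‖ϑ‖^2 - 1) * Pq n ξ : ℝ) : ℂ) = - ∑ j, (sg n j : ℂ) * (Lfun Ω ϑ a j ξ : ℂ)^2 := by
    have := sum_Lfun_sq hΩ ϑ a ξ
    rw [show (a^2 * ‖ϑ‖^2 - 1) * Pq n ξ = - ((1 - a^2 * ‖ϑ‖^2) * Pq n ξ) by ring, ← this]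
    push_cast; rfl
  have e2 : ((a * n * ‖ϑ‖^2 : ℝ) : ℂ) = - ∑ j, (sg n j : ℂ) * (Lfun Ω ϑ a j (vvec Ω ϑ j) : ℂ) := by
    have := sum_Lfun_trace hΩ ϑ a
    rw [show a * n * ‖ϑ‖^2 = - (- (a * n * ‖ϑ‖^2)) by ring, ← this]
    push_cast; rfl
  simp only [e1, e2, _root_.sub_apply, _root_.smul_apply, mulL_apply, smul_eq_mul]
  rw [mul_neg, sub_neg_eq_add, neg_add_eq_sub, Finset.mul_sum, ← Finset.sum_sub_distrib, Finset.mul_sum, Finset.sum_mul]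
  exact Finset.sum_congr rfl fun j _ => by ring

/-! ### The oscillatory integral in `ρ` -/

/-- The weight `(1 − ρ²)^{(n−2)/2}`. -/
def wt (n : ℕ) (ρ : ℝ) : ℝ := (1 - ρ^2) ^ (((n : ℝ) - 2)/2)

lemma wt_nonneg (n : ℕ) {ρ : ℝ} (h : ρ ∈ Ioo (0:ℝ) 1) : 0 ≤ wt n ρ :=
  Real.rpow_nonneg (by nlinarith [h.1, h.2]) _

lemma wt_measurable (n : ℕ) : Measurable (wt n) := by unfold wt; fun_prop

/-- For `n = 1` the weight is singular at `ρ = 1`, but it is always dominated by `(1 − ρ)^{-1/2}`. -/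
lemma wt_integrable {n : ℕ} (hn : 1 ≤ n) : IntegrableOn (wt n) (Ioo 0 1) := by
  have h1 : IntervalIntegrable (fun ρ : ℝ => (1 - ρ) ^ (-(1/2) : ℝ)) volume 0 1 := by
    have := (intervalIntegral.intervalIntegrable_rpow' (a := 0) (b := 1) (r := -(1/2)) (by norm_num)).comp_sub_left 1
    simpa using this.symm
  have h2 : IntegrableOn (fun ρ : ℝ => (1 - ρ) ^ (-(1/2) : ℝ)) (Ioo 0 1) :=
    ((intervalIntegrable_iff_integrableOn_Ioc_of_le zero_le_one).1 h1).mono_set Ioo_subset_Ioc_self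
  refine Integrable.mono' h2 (wt_measurable n).aestronglyMeasurable ?_
  filter_upwards [ae_restrict_mem measurableSet_Ioo] with ρ hρ
  rw [Real.norm_of_nonneg (wt_nonneg n hρ)]
  have hn' : (1:ℝ) ≤ n := by exact_mod_cast hn
  have hp : 0 < 1 - ρ^2 := by nlinarith [hρ.1, hρ.2]
  calc wt n ρ ≤ (1 - ρ^2) ^ (-(1/2) : ℝ) :=
        Real.rpow_le_rpow_of_exponent_ge hp (by nlinarith [hρ.1]) (by linarith)
    _ ≤ _ := Real.rpow_le_rpow_of_nonpos (by linarith [hρ.2]) (by nlinarith [hρ.1, hρ.2]) (by norm_num)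

/-- With `a = ερ/T`, the symbol of `slice_identity` times the weight and `e^{iaP}` is the
`ρ`-derivative of `i ε T (1 − ρ²)^{n/2} e^{i a P}`, which vanishes at `ρ = 1`. -/
lemma radial {n : ℕ} (hn : 1 ≤ n) (ε T : ℝ) (hε : ε * ε = 1) (hT : 0 < T) (ξ : Eu (2*n)) :
    ∫ ρ in Ioo (0:ℝ) 1, (wt n ρ : ℂ) * (Eosc n (ε * ρ / T) ξ *
      (((ρ^2 - 1) * Pq n ξ : ℝ) - Complex.I * ((ε * ρ * n * T : ℝ) : ℂ))) = - (ε * T * Complex.I) := by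
  have hTc : (T : ℂ) ≠ 0 := by exact_mod_cast hT.ne'
  have hεc : (ε : ℂ) * ε = 1 := by exact_mod_cast hε
  have hn' : (0:ℝ) < n := by exact_mod_cast hn
  have hcont : ContinuousOn (fun ρ : ℝ => (ε * T * Complex.I) * (((1 - ρ^2) ^ ((n:ℝ)/2) : ℝ) : ℂ) *
      Eosc n (ε * ρ / T) ξ) (Icc 0 1) := by
    have h1 : Continuous fun ρ : ℝ => (1 - ρ^2) ^ ((n:ℝ)/2) :=
      (by fun_prop : Continuous fun ρ : ℝ => 1 - ρ^2).rpow_const fun _ => Or.inr (by positivity)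
    unfold Eosc
    fun_prop
  have hder : ∀ ρ ∈ Ioo (0:ℝ) 1, HasDerivAt (fun ρ : ℝ => (ε * T * Complex.I) *
      (((1 - ρ^2) ^ ((n:ℝ)/2) : ℝ) : ℂ) * Eosc n (ε * ρ / T) ξ)
      ((wt n ρ : ℂ) * (Eosc n (ε * ρ / T) ξ *
      (((ρ^2 - 1) * Pq n ξ : ℝ) - Complex.I * ((ε * ρ * n * T : ℝ) : ℂ)))) ρ := by
    intro ρ hρ
    have hp : 0 < 1 - ρ^2 := by nlinarith [hρ.1, hρ.2]
    have hw : (1 - ρ^2) ^ ((n:ℝ)/2) = (1 - ρ^2) * wt n ρ := by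
      rw [wt, ← Real.rpow_one_add' hp.le (by ring_nf; positivity)]
      congr 1; ring
    have d1 : HasDerivAt (fun ρ : ℝ => (1 - ρ^2) ^ ((n:ℝ)/2)) (- (n * ρ * wt n ρ)) ρ := by
      have h := ((hasDerivAt_pow 2 ρ).const_sub 1).rpow_const (p := (n:ℝ)/2) (Or.inl hp.ne')
      convert h using 1
      rw [wt, show (n:ℝ)/2 - 1 = (n - 2)/2 by ring]
      push_cast; ring
    have d2 : HasDerivAt (fun ρ : ℝ => Eosc n (ε * ρ / T) ξ)
        (Eosc n (ε * ρ / T) ξ * (Complex.I * ((ε / T * Pq n ξ : ℝ) : ℂ))) ρ := by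
      have h : HasDerivAt (fun ρ : ℝ => ε * ρ / T * Pq n ξ) (ε / T * Pq n ξ) ρ := by
        have := (((hasDerivAt_id ρ).const_mul ε).div_const T).mul_const (Pq n ξ)
        simpa using this
      exact (h.ofReal_comp.const_mul Complex.I).cexp
    have := (d1.ofReal_comp.const_mul (ε * T * Complex.I : ℂ)).mul d2
    refine this.congr_deriv ?_
    rw [hw]
    push_cast
    field_simp
    linear_combination ((wt n ρ : ℂ) * Eosc n (ε * ρ / T) ξ * (Pq n ξ : ℂ) * (1 - ρ^2)) *
      (Complex.I ^ 2 * hεc + Complex.I_sq)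
  have h_intg : IntegrableOn (fun ρ : ℝ => (wt n ρ : ℂ) * (Eosc n (ε * ρ / T) ξ *
      (((ρ^2 - 1) * Pq n ξ : ℝ) - Complex.I * ((ε * ρ * n * T : ℝ) : ℂ)))) (Ioo 0 1) := by
    have hb : ContinuousOn (fun ρ : ℝ => Eosc n (ε * ρ / T) ξ *
      (((ρ^2 - 1) * Pq n ξ : ℝ) - Complex.I * ((ε * ρ * n * T : ℝ) : ℂ))) (Icc 0 1) := by
      unfold Eosc; fun_prop
    obtain ⟨C, hC⟩ := isCompact_Icc.exists_bound_of_continuousOn hb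
    refine Integrable.mul_bdd (c := C) (wt_integrable hn).ofReal
      (hb.mono Ioo_subset_Icc_self |>.aestronglyMeasurable measurableSet_Ioo) ?_
    filter_upwards [ae_restrict_mem measurableSet_Ioo] with ρ hρ
    exact hC ρ (Ioo_subset_Icc_self hρ)
  have h := intervalIntegral.integral_eq_sub_of_hasDerivAt_of_le zero_le_one hcont hder
    ((intervalIntegrable_iff_integrableOn_Ioo_of_le zero_le_one).2 h_intg)
  rw [intervalIntegral.integral_of_le zero_le_one, integral_Ioc_eq_integral_Ioo] at h
  rw [h]
  have : (0:ℝ) ^ ((n:ℝ)/2) = 0 := Real.zero_rpow (by positivity)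
  simp [this, Eosc]

/-- The oscillatory integral `∫₀¹ (1−ρ²)^{(n−2)/2} e^{i b ρ P(ξ)} dρ`. -/
def Jop (n : ℕ) (b : ℝ) (ξ : Eu (2*n)) : ℂ := ∫ ρ in Ioo (0:ℝ) 1, (wt n ρ : ℂ) * Eosc n (b * ρ) ξ

lemma Eosc_cont2 (n : ℕ) (b : ℝ) : Continuous fun z : ℝ × Eu (2*n) => Eosc n (b * z.1) z.2 := by
  have := Pq_cont n
  unfold Eosc; fun_prop

/-- Absolute convergence that justifies exchanging the `ρ`- and `ξ`-integrals. -/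
lemma prod_int {n : ℕ} (b : ℝ) (w : ℝ → ℂ) (hw : IntegrableOn w (Ioo 0 1)) (χ : 𝓢(Eu (2*n), ℂ)) :
    Integrable (fun z : ℝ × Eu (2*n) => w z.1 * (Eosc n (b * z.1) z.2 * χ z.2))
      ((volume.restrict (Ioo 0 1)).prod volume) := by
  have h := (Integrable.mul_prod hw (χ.integrable (μ := volume))).bdd_mul (c := 1)
    (Eosc_cont2 n b).aestronglyMeasurable (ae_of_all _ fun z => (Eosc_norm n _ _).le)
  refine h.congr (ae_of_all _ fun z => ?_)
  simp only; ring

lemma Jop_mul {n : ℕ} (b : ℝ) (χ : Eu (2*n) → ℂ) (ξ : Eu (2*n)) :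
    Jop n b ξ * χ ξ = ∫ ρ in Ioo (0:ℝ) 1, (wt n ρ : ℂ) * (Eosc n (b * ρ) ξ * χ ξ) := by
  rw [Jop, ← integral_mul_const]
  simp only [mul_assoc]

lemma Jop_integrable {n : ℕ} (hn : 1 ≤ n) (b : ℝ) (χ : 𝓢(Eu (2*n), ℂ)) :
    Integrable (fun ξ => Jop n b ξ * χ ξ) := by
  have := (prod_int b (fun ρ => (wt n ρ : ℂ)) (wt_integrable hn).ofReal χ).integral_prod_right
  exact this.congr (ae_of_all _ fun ξ => (Jop_mul b χ ξ).symm)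

/-- The integrals with `b = ±1/‖ϑ‖` reduce the ultra-hyperbolic operator on a slice to the
constant `∓i‖ϑ‖`. -/
lemma Jop_identity {n s : ℕ} (hn : 1 ≤ n) {Ω : Fin s → Matrix (Fin (2*n)) (Fin (2*n)) ℝ}
    (hΩ : IsPseudoHType n 0 Ω) (ϑ : Eu s) (hϑ : ϑ ≠ 0) (ε : ℝ) (hε : ε * ε = 1)
    (φ : 𝓢(Eu (2*n) × Eu s, ℂ)) :
    ∫ ξ, Jop n (ε / ‖ϑ‖) ξ * slice ϑ (FTS (2*n) s (DS Ω φ)) ξ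
      = - (ε * ‖ϑ‖ * Complex.I) * ∫ ξ, slice ϑ (FTS (2*n) s φ) ξ := by
  have hT : 0 < ‖ϑ‖ := norm_pos_iff.2 hϑ
  set T := ‖ϑ‖ with hTd
  set g := slice ϑ (FTS (2*n) s (DS Ω φ)) with hg
  set χ := slice ϑ (FTS (2*n) s φ) with hχ
  set b := ε / T with hb
  have hW : IntegrableOn (fun ρ => (wt n ρ : ℂ)) (Ioo 0 1) := (wt_integrable hn).ofReal
  have hW1 : IntegrableOn (fun ρ => (wt n ρ : ℂ) * ((ρ^2 - 1 : ℝ) : ℂ)) (Ioo 0 1) := by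
    refine hW.mul_bdd (c := 1) (by fun_prop) ?_
    filter_upwards [ae_restrict_mem measurableSet_Ioo] with ρ hρ
    rw [Complex.norm_real, Real.norm_eq_abs, abs_le]
    constructor <;> nlinarith [hρ.1, hρ.2]
  have hW2 : IntegrableOn (fun ρ => (wt n ρ : ℂ) * (- Complex.I * ((ε * ρ * n * T : ℝ) : ℂ))) (Ioo 0 1) := by
    refine hW.mul_bdd (c := |ε| * n * T) (by fun_prop) ?_
    filter_upwards [ae_restrict_mem measurableSet_Ioo] with ρ hρ
    rw [norm_mul, norm_neg, Complex.norm_I, one_mul, Complex.norm_real, Real.norm_eq_abs, abs_mul,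
      abs_mul, abs_mul, abs_of_pos hρ.1, abs_of_pos hT, Nat.abs_cast]
    have : |ε| * ρ ≤ |ε| * 1 := by gcongr; exact hρ.2.le
    rw [mul_one] at this
    gcongr
  -- `P χ` is again a Schwartz function, so `prod_int` applies to it.
  set χP : 𝓢(Eu (2*n), ℂ) := ∑ i, (sg n i : ℂ) • mulL (EuclideanSpace.proj i) (mulL (EuclideanSpace.proj i) χ)
    with hχP
  have hχP' : ∀ ξ, χP ξ = (Pq n ξ : ℂ) * χ ξ := by
    intro ξ
    simp only [hχP, _root_.sum_apply, _root_.smul_apply, mulL_apply, smul_eq_mul, Pq_eq]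
    push_cast
    rw [Finset.sum_mul]
    refine Finset.sum_congr rfl fun i _ => ?_
    simp; ring
  have hprod2 : Integrable (fun z : ℝ × Eu (2*n) => (wt n z.1 : ℂ) * (Eosc n (b * z.1) z.2 *
      (((z.1^2 - 1) * Pq n z.2 : ℝ) - Complex.I * ((ε * z.1 * n * T : ℝ) : ℂ)) * χ z.2))
      ((volume.restrict (Ioo 0 1)).prod volume) := by
    refine ((prod_int b _ hW1 χP).add (prod_int b _ hW2 χ)).congr (ae_of_all _ fun z => ?_)
    simp only [Pi.add_apply, hχP']
    push_cast; ring
  have hab : ∀ ρ : ℝ, b * ρ = ε * ρ / T := fun ρ => by rw [hb]; ring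
  calc ∫ ξ, Jop n b ξ * g ξ
      = ∫ ξ, ∫ ρ in Ioo (0:ℝ) 1, (wt n ρ : ℂ) * (Eosc n (b * ρ) ξ * g ξ) := by simp only [Jop_mul]
    _ = ∫ ρ in Ioo (0:ℝ) 1, ∫ ξ, (wt n ρ : ℂ) * (Eosc n (b * ρ) ξ * g ξ) :=
        (integral_integral_swap (prod_int b _ hW g)).symm
    _ = ∫ ρ in Ioo (0:ℝ) 1, ∫ ξ, (wt n ρ : ℂ) * (Eosc n (b * ρ) ξ *
      (((ρ^2 - 1) * Pq n ξ : ℝ) - Complex.I * ((ε * ρ * n * T : ℝ) : ℂ)) * χ ξ) := by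
        congr 1; ext ρ
        rw [integral_const_mul, integral_const_mul, hg, slice_identity hΩ ϑ (b * ρ) φ]
        have e1 : (b * ρ)^2 * T^2 - 1 = ρ^2 - 1 := by
          rw [hb]; field_simp; linear_combination ρ^2 * hε
        have e2 : b * ρ * n * T^2 = ε * ρ * n * T := by rw [hb]; field_simp
        rw [← hTd, e1, e2]
    _ = ∫ ξ, ∫ ρ in Ioo (0:ℝ) 1, (wt n ρ : ℂ) * (Eosc n (b * ρ) ξ *
      (((ρ^2 - 1) * Pq n ξ : ℝ) - Complex.I * ((ε * ρ * n * T : ℝ) : ℂ)) * χ ξ) :=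
        integral_integral_swap hprod2
    _ = ∫ ξ, - (ε * T * Complex.I) * χ ξ := by
        congr 1; ext ξ
        rw [← radial hn ε T hε hT ξ, ← integral_mul_const]
        simp only [hab, mul_assoc]
    _ = _ := integral_const_mul _ _

lemma qlm_eq {n s : ℕ} (hn : 1 ≤ n) (lam mu : Eu s → ℂ) (ξ : Eu (2*n)) (ϑ : Eu s) :
    qlm n s lam mu ξ ϑ = Complex.I * (((2*Real.pi) ^ (-((n : ℝ) + s/2)) : ℝ) : ℂ) * ((‖ϑ‖ : ℝ) : ℂ)⁻¹ *
      (lam ϑ * Jop n (1 / ‖ϑ‖) ξ - mu ϑ * Jop n (-1 / ‖ϑ‖) ξ) := by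
  have hi : ∀ b, IntegrableOn (fun ρ => (wt n ρ : ℂ) * Eosc n (b * ρ) ξ) (Ioo 0 1) := fun b =>
    (wt_integrable hn).ofReal.mul_bdd (c := 1)
      (Continuous.aestronglyMeasurable (by unfold Eosc; fun_prop)) (ae_of_all _ fun ρ => (Eosc_norm n _ _).le)
  have key : lam ϑ * Jop n (1 / ‖ϑ‖) ξ - mu ϑ * Jop n (-1 / ‖ϑ‖) ξ = ∫ ρ in Ioo (0:ℝ) 1,
      (lam ϑ * ((wt n ρ : ℂ) * Eosc n (1 / ‖ϑ‖ * ρ) ξ)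
        - mu ϑ * ((wt n ρ : ℂ) * Eosc n (-1 / ‖ϑ‖ * ρ) ξ)) := by
    rw [integral_sub ((hi _).const_mul _) ((hi _).const_mul _), integral_const_mul,
      integral_const_mul, Jop, Jop]
  rw [qlm, key]
  congr 2
  ext ρ
  have e1 : Eosc n (1 / ‖ϑ‖ * ρ) ξ = Complex.exp (Complex.I * ((Pq n ξ * ρ / ‖ϑ‖ : ℝ) : ℂ)) := by
    rw [Eosc]; congr 3; ring
  have e2 : Eosc n (-1 / ‖ϑ‖ * ρ) ξ = Complex.exp (-Complex.I * ((Pq n ξ * ρ / ‖ϑ‖ : ℝ) : ℂ)) := by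
    rw [Eosc]; congr 1; push_cast; ring
  rw [e1, e2, wt]
  ring

/-- On each slice `ϑ ≠ 0`, the two exponentials contribute with weights `λ` and `μ` of sum `1`, so the
kernel inverts the ultra-hyperbolic operator up to the constant of Fourier inversion. -/
lemma slice_main {n s : ℕ} (hn : 1 ≤ n) {Ω : Fin s → Matrix (Fin (2*n)) (Fin (2*n)) ℝ}
    (hΩ : IsPseudoHType n 0 Ω) (lam mu : Eu s → ℂ) (hsum : ∀ ϑ, lam ϑ + mu ϑ = 1)
    (ϑ : Eu s) (hϑ : ϑ ≠ 0) (φ : 𝓢(Eu (2*n) × Eu s, ℂ)) :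
    ∫ ξ, qlm n s lam mu ξ ϑ * FTS (2*n) s (DS Ω φ) (ξ, ϑ)
      = (((2*Real.pi) ^ (-((n : ℝ) + s/2)) : ℝ) : ℂ) * ∫ ξ, FTS (2*n) s φ (ξ, ϑ) := by
  have hT : (‖ϑ‖ : ℂ) ≠ 0 := by exact_mod_cast (norm_pos_iff.2 hϑ).ne'
  set c : ℂ := (((2*Real.pi) ^ (-((n : ℝ) + s/2)) : ℝ) : ℂ)
  have h : ∀ ξ, qlm n s lam mu ξ ϑ * FTS (2*n) s (DS Ω φ) (ξ, ϑ) =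
      Complex.I * c * (‖ϑ‖ : ℂ)⁻¹ * (lam ϑ * (Jop n (1 / ‖ϑ‖) ξ * slice ϑ (FTS (2*n) s (DS Ω φ)) ξ)
        - mu ϑ * (Jop n (-1 / ‖ϑ‖) ξ * slice ϑ (FTS (2*n) s (DS Ω φ)) ξ)) := by
    intro ξ; rw [qlm_eq hn, slice_apply]; ring
  simp_rw [h]
  rw [integral_const_mul, integral_sub ((Jop_integrable hn _ _).const_mul _)
    ((Jop_integrable hn _ _).const_mul _), integral_const_mul, integral_const_mul,
    Jop_identity hn hΩ ϑ hϑ 1 (by norm_num), Jop_identity hn hΩ ϑ hϑ (-1) (by norm_num)]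
  simp only [slice_apply]
  push_cast
  field_simp
  have := hsum ϑ
  linear_combination (-(c * ∫ ξ, FTS (2*n) s φ (ξ, ϑ)) * Complex.I^2) * this - (c * ∫ ξ, FTS (2*n) s φ (ξ, ϑ)) * Complex.I_sq

/-! ### Integrability of the kernel -/

lemma integrable_inv_one_add_norm_pow {E : Type*} [NormedAddCommGroup E] [NormedSpace ℝ E]
    [FiniteDimensional ℝ E] [MeasurableSpace E] [BorelSpace E] (ν : Measure E) [ν.IsAddHaarMeasure]
    {k : ℕ} (hk : Module.finrank ℝ E < k) : Integrable (fun x : E => ((1 + ‖x‖) ^ k)⁻¹) ν := by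
  refine (integrable_one_add_norm (μ := ν) (r := k) (by exact_mod_cast hk)).congr
    (ae_of_all _ fun x => ?_)
  simp only
  rw [Real.rpow_neg (by positivity), Real.rpow_natCast]

/-- In dimension `s ≥ 2` the singularity `‖ϑ‖⁻¹` is locally integrable. -/
lemma integrable_inv_norm_mul {s : ℕ} (hs : 2 ≤ s) :
    Integrable (fun ϑ : Eu s => ‖ϑ‖⁻¹ * ((1 + ‖ϑ‖) ^ s)⁻¹) := by
  have : Nontrivial (Eu s) := Module.nontrivial_of_finrank_pos (R := ℝ) (by simp; omega)
  refine (integrable_fun_norm_addHaar (volume : Measure (Eu s))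
    (f := fun r : ℝ => r⁻¹ * ((1 + r) ^ s)⁻¹)).2 ?_
  have h : IntegrableOn (fun y : ℝ => ((1 + ‖y‖) ^ 2)⁻¹) (Ioi 0) :=
    (integrable_inv_one_add_norm_pow volume (by simp)).integrableOn
  refine Integrable.mono' h (by fun_prop) ?_
  filter_upwards [ae_restrict_mem measurableSet_Ioi] with y hy
  have hy : 0 < y := hy
  rw [finrank_euclideanSpace_fin, smul_eq_mul, Real.norm_of_nonneg (by positivity),
    Real.norm_of_nonneg hy.le]
  obtain ⟨m, rfl⟩ : ∃ m, s = m + 2 := ⟨s - 2, by omega⟩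
  have hm : y ^ m ≤ (1 + y) ^ m := by gcongr; linarith
  calc y ^ (m + 2 - 1) * (y⁻¹ * ((1 + y) ^ (m + 2))⁻¹) = y ^ m * ((1 + y) ^ (m + 2))⁻¹ := by
        rw [show m + 2 - 1 = m + 1 by omega, pow_succ]; field_simp
    _ ≤ (1 + y) ^ m * ((1 + y) ^ (m + 2))⁻¹ := by gcongr
    _ = _ := by field_simp; ring

lemma qlm_aesm (n s : ℕ) {lam mu : Eu s → ℂ} (hlam : Measurable lam) (hmu : Measurable mu) :
    AEStronglyMeasurable (fun p : Eu (2*n) × Eu s => qlm n s lam mu p.1 p.2) := by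
  have hP : Measurable (Pq n) := (Pq_cont n).measurable
  have h : StronglyMeasurable (fun z : (Eu (2*n) × Eu s) × ℝ =>
      ((((1 - z.2^2) ^ (((n : ℝ) - 2)/2) : ℝ)) : ℂ) *
        (lam z.1.2 * Complex.exp (Complex.I * ((Pq n z.1.1 * z.2 / ‖z.1.2‖ : ℝ) : ℂ))
          - mu z.1.2 * Complex.exp (-Complex.I * ((Pq n z.1.1 * z.2 / ‖z.1.2‖ : ℝ) : ℂ)))) :=
    Measurable.stronglyMeasurable (by fun_prop)
  have h2 := (h.integral_prod_right' (ν := volume.restrict (Ioo (0:ℝ) 1))).measurable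
  unfold qlm
  refine Measurable.aestronglyMeasurable ?_
  refine Measurable.mul (by fun_prop) h2

lemma Jop_bound {n : ℕ} (hn : 1 ≤ n) (b : ℝ) (ξ : Eu (2*n)) :
    ‖Jop n b ξ‖ ≤ ∫ ρ in Ioo (0:ℝ) 1, wt n ρ := by
  refine norm_integral_le_of_norm_le (wt_integrable hn) ?_
  filter_upwards [ae_restrict_mem measurableSet_Ioo] with ρ hρ
  rw [norm_mul, Eosc_norm, Complex.norm_real, Real.norm_of_nonneg (wt_nonneg n hρ), mul_one]

lemma qlm_bound {n s : ℕ} (hn : 1 ≤ n) {lam mu : Eu s → ℂ}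
    (hlamB : ∃ C, ∀ ϑ, ‖lam ϑ‖ ≤ C) (hmuB : ∃ C, ∀ ϑ, ‖mu ϑ‖ ≤ C) :
    ∃ C, 0 ≤ C ∧ ∀ ξ ϑ, ‖qlm n s lam mu ξ ϑ‖ ≤ C * ‖ϑ‖⁻¹ := by
  obtain ⟨A, hA⟩ := hlamB
  obtain ⟨B, hB⟩ := hmuB
  have hA0 : 0 ≤ A := (norm_nonneg _).trans (hA 0)
  have hB0 : 0 ≤ B := (norm_nonneg _).trans (hB 0)
  set W := ∫ ρ in Ioo (0:ℝ) 1, wt n ρ with hW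
  have hW0 : 0 ≤ W := (norm_nonneg _).trans (Jop_bound hn 0 0)
  set c : ℝ := (2*Real.pi) ^ (-((n : ℝ) + s/2)) with hc
  have hc0 : 0 ≤ c := by positivity
  refine ⟨c * (A * W + B * W), by positivity, fun ξ ϑ => ?_⟩
  rw [qlm_eq hn, norm_mul, norm_mul, norm_mul, Complex.norm_I, one_mul, norm_inv,
    Complex.norm_real, Complex.norm_real, norm_norm, Real.norm_of_nonneg hc0]
  have h1 : ‖lam ϑ * Jop n (1 / ‖ϑ‖) ξ - mu ϑ * Jop n (-1 / ‖ϑ‖) ξ‖ ≤ A * W + B * W := by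
    refine (norm_sub_le _ _).trans ?_
    rw [norm_mul, norm_mul]
    have := Jop_bound hn (1 / ‖ϑ‖) ξ
    have := Jop_bound hn (-1 / ‖ϑ‖) ξ
    gcongr <;> first | exact hA ϑ | exact hB ϑ
  calc c * ‖ϑ‖⁻¹ * ‖lam ϑ * Jop n (1 / ‖ϑ‖) ξ - mu ϑ * Jop n (-1 / ‖ϑ‖) ξ‖
      ≤ c * ‖ϑ‖⁻¹ * (A * W + B * W) := by gcongr
    _ = _ := by ring

/-- The kernel is `O(‖ϑ‖⁻¹)` uniformly in `ξ`, so it is integrable against Schwartz functions. -/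
lemma qlm_mul_integrable {n s : ℕ} (hn : 1 ≤ n) (hs : 2 ≤ s) {lam mu : Eu s → ℂ}
    (hlam : Measurable lam) (hmu : Measurable mu)
    (hlamB : ∃ C, ∀ ϑ, ‖lam ϑ‖ ≤ C) (hmuB : ∃ C, ∀ ϑ, ‖mu ϑ‖ ≤ C)
    (ψ : 𝓢(Eu (2*n) × Eu s, ℂ)) :
    Integrable (fun p : Eu (2*n) × Eu s => qlm n s lam mu p.1 p.2 * ψ p) := by
  obtain ⟨C, hC0, hC⟩ := qlm_bound (s := s) hn hlamB hmuB
  obtain ⟨D, hD⟩ : ∃ D, ∀ p, (1 + ‖p‖) ^ (2*n + 1 + s) * ‖ψ p‖ ≤ D :=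
    ⟨_, fun p => by
      simpa using one_add_le_sup_seminorm_apply (𝕜 := ℂ) (m := (2*n + 1 + s, 0)) le_rfl le_rfl ψ p⟩
  have hdom : Integrable (fun p : Eu (2*n) × Eu s => (C * D) * (((1 + ‖p.1‖) ^ (2*n + 1))⁻¹ *
      (‖p.2‖⁻¹ * ((1 + ‖p.2‖) ^ s)⁻¹))) :=
    (Integrable.mul_prod (integrable_inv_one_add_norm_pow (volume : Measure (Eu (2*n))) (by simp))
      (integrable_inv_norm_mul hs)).const_mul _
  refine hdom.mono' ((qlm_aesm n s hlam hmu).mul ψ.continuous.aestronglyMeasurable)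
    (ae_of_all _ fun p => ?_)
  have h1 : (1 + ‖p.1‖) ^ (2*n + 1) * (1 + ‖p.2‖) ^ s ≤ (1 + ‖p‖) ^ (2*n + 1 + s) := by
    rw [pow_add _ _ s]
    have := norm_fst_le p
    have := norm_snd_le p
    gcongr
  have h2 : ‖ψ p‖ ≤ D * (((1 + ‖p.1‖) ^ (2*n + 1))⁻¹ * ((1 + ‖p.2‖) ^ s)⁻¹) := by
    rw [← mul_inv, ← div_eq_mul_inv, le_div_iff₀ (by positivity), mul_comm]
    exact (mul_le_mul_of_nonneg_right h1 (norm_nonneg _)).trans (hD p)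
  rw [norm_mul]
  calc ‖qlm n s lam mu p.1 p.2‖ * ‖ψ p‖
      ≤ (C * ‖p.2‖⁻¹) * (D * (((1 + ‖p.1‖) ^ (2*n + 1))⁻¹ * ((1 + ‖p.2‖) ^ s)⁻¹)) := by
        gcongr; exact hC _ _
    _ = _ := by ring

end FundamentalSolution

/-! ### The fundamental solution -/

theorem stmt4 (n s : ℕ) (hn : 1 ≤ n) (hs : 2 ≤ s)
    (Ω : Fin s → Matrix (Fin (2*n)) (Fin (2*n)) ℝ) (hΩ : IsPseudoHType n 0 Ω)
    (lam mu : Eu s → ℂ) (hlam : Measurable lam) (hmu : Measurable mu)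
    (hlamB : ∃ C, ∀ ϑ, ‖lam ϑ‖ ≤ C) (hmuB : ∃ C, ∀ ϑ, ‖mu ϑ‖ ≤ C)
    (hsum : ∀ ϑ, lam ϑ + mu ϑ = 1) :
    ∀ φ : SchwartzMap (Eu (2*n) × Eu s) ℂ,
      (Integrable (fun p : Eu (2*n) × Eu s => qlm n s lam mu p.1 p.2 * FTprod (2*n) s (⇑φ) p)) ∧
      (∫ p : Eu (2*n) × Eu s,
          qlm n s lam mu p.1 p.2 * FTprod (2*n) s (DeltaOp Ω ⇑φ) p) = φ 0 := by
  intro φ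
  have h_intg := fun ψ => qlm_mul_integrable hn hs hlam hmu hlamB hmuB (FTS (2*n) s ψ)
  refine ⟨by simpa only [FTS_apply] using h_intg φ, ?_⟩
  have hΔ : ∀ p, FTprod (2*n) s (DeltaOp Ω ⇑φ) p = FTS (2*n) s (DS Ω φ) p := fun p => by
    rw [FTS_apply, DS_apply]
  have : Nontrivial (Eu s) := Module.nontrivial_of_finrank_pos (R := ℝ) (by simp; omega)
  simp_rw [hΔ]
  have h1 := h_intg (DS Ω φ)
  rw [Measure.volume_eq_prod] at h1 ⊢
  rw [integral_prod_symm _ h1]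
  have h2 : ∀ᵐ ϑ : Eu s, ∫ ξ, qlm n s lam mu ξ ϑ * FTS (2*n) s (DS Ω φ) (ξ, ϑ)
      = (((2*Real.pi) ^ (-((n : ℝ) + s/2)) : ℝ) : ℂ) * ∫ ξ, FTS (2*n) s φ (ξ, ϑ) := by
    filter_upwards [Measure.ae_ne volume (0 : Eu s)] with ϑ hϑ
    exact slice_main hn hΩ lam mu hsum ϑ hϑ φ
  have h3 : Integrable (FTS (2*n) s φ) ((volume : Measure (Eu (2*n))).prod (volume : Measure (Eu s))) := by
    rw [← Measure.volume_eq_prod]; exact (FTS (2*n) s φ).integrable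
  rw [integral_congr_ae h2, integral_const_mul, ← integral_prod_symm _ h3,
    ← Measure.volume_eq_prod, ← FTS_inv (2*n) s φ]
  congr 4
  push_cast; ring
end
end

section
/- Let n ≥ 2. There exist ℓ ∈ ℕ and a constant C_ℓ > 0, independent of ψ and of ε, such that for every Schwartz function ψ ∈ 𝓢(ℝ^{2n}) and every ε > 0: | ∫_{ℝ^{2n}} ψ(x)·(P(x) − iε)^{−(n−1)} dx | ≤ C_ℓ·( ‖ψ‖_{L¹(ℝ^{2n})} + ‖Δ^ℓ ψ‖_{L¹(ℝ^{2n})} ), where Δ = Σ_{j=1}^{2n} ∂²/∂x_j² is the Laplacian on ℝ^{2n}. -/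
/-!
Write `k = n - 2`. As `P - iε = -i (ε + iP)`, the Gamma integral gives, up to a constant of modulus
at most one,

  `∫ ψ (P - iε)^{-(k+1)} dx = ∫₀^∞ t^k e^{-εt} J(t) dt`,  `J(t) = ∫ ψ(x) e^{-itP(x)} dx`

(`integral_mul_inv_pow_eq`). Trivially `|J(t)| ≤ ‖ψ‖₁`, which handles `t ≤ 1`. For `t ≥ 1` the
dispersive estimate `|J(t)| ≤ (π/t)^n ‖𝓕ψ‖₁` (`norm_integral_mul_phase_le`) bounds the integrand by
`π^n ‖𝓕ψ‖₁ t^{-2}`, which is integrable uniformly in `ε`. The dispersive estimate follows by moving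
the Fourier transform onto the Gaussian `exp (-∑ (δ ± it) xᵢ²)`, whose transform is explicit and
bounded by `(π/t)^n`, and letting `δ → 0⁺`.

Finally `(1 + |2πξ|^{2ℓ}) |𝓕ψ(ξ)| ≤ ‖ψ‖₁ + ‖Δ^ℓ ψ‖₁`, and with `ℓ = 2n` the weight has an integrable
reciprocal on `ℝ^{2n}`, so `‖𝓕ψ‖₁ ≤ C (‖ψ‖₁ + ‖Δ^ℓ ψ‖₁)` (`exists_integral_norm_fourier_le`).
-/

open MeasureTheory Filter Matrix Set
open scoped Topology Real

noncomputable section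

/-! ### The Laplacian and the `L¹` norm of the Fourier transform -/

open scoped SchwartzMap FourierTransform Laplacian LineDeriv in
lemma fourier_laplacian {d : ℕ} (f : 𝓢(Eu d, ℂ)) (ξ : Eu d) :
    𝓕 (Δ f) ξ = -((2 * π) ^ 2 * ‖ξ‖ ^ 2 : ℝ) • 𝓕 f ξ := by
  have h : (fun x : Eu d => ‖x‖ ^ 2).HasTemperateGrowth := by fun_prop
  rw [SchwartzMap.laplacian_eq_fourierMultiplierCLM, SchwartzMap.fourierMultiplierCLM_apply,
    ← FourierTransform.fourierInv_smul, FourierTransform.fourier_fourierInv_eq,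
    _root_.smul_apply]
  erw [SchwartzMap.smulLeftCLM_apply_apply h]
  rw [smul_smul]
  ring_nf

open scoped SchwartzMap FourierTransform Laplacian in
lemma fourier_laplacian_iterate {d : ℕ} (ℓ : ℕ) (f : 𝓢(Eu d, ℂ)) (ξ : Eu d) :
    ‖𝓕 ((fun g : 𝓢(Eu d, ℂ) => Δ g)^[ℓ] f) ξ‖ = ((2 * π) ^ 2 * ‖ξ‖ ^ 2) ^ ℓ * ‖𝓕 f ξ‖ := by
  induction ℓ with
  | zero => simp
  | succ k ih =>
    rw [Function.iterate_succ_apply', fourier_laplacian, norm_smul, ih, norm_neg,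
      Real.norm_of_nonneg (by positivity)]
    ring

open scoped SchwartzMap FourierTransform Laplacian LineDeriv in
/-- On Schwartz functions the iterates of `LapOp` are those of Mathlib's Laplacian. -/
lemma lapOp_iterate {d : ℕ} (ℓ : ℕ) (f : 𝓢(Eu d, ℂ)) :
    (LapOp d)^[ℓ] (⇑f) = ⇑((fun g : 𝓢(Eu d, ℂ) => Δ g)^[ℓ] f) := by
  induction ℓ with
  | zero => simp
  | succ k ih =>
    rw [Function.iterate_succ_apply', Function.iterate_succ_apply', ih]
    ext x
    rw [SchwartzMap.laplacian_eq_sum (EuclideanSpace.basisFun (Fin d) ℝ), _root_.sum_apply]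
    simp only [LapOp, dir2, EuclideanSpace.basisFun_apply]
    rfl

open scoped SchwartzMap FourierTransform in
lemma norm_fourier_le {d : ℕ} (f : 𝓢(Eu d, ℂ)) (ξ : Eu d) : ‖𝓕 f ξ‖ ≤ ∫ x, ‖f x‖ := by
  simpa [SchwartzMap.norm_toLp_one] using f.norm_fourier_apply_le_toLp_one ξ

/-- The `L¹` norm of `𝓕 f` is controlled by `‖f‖₁ + ‖Δ^d f‖₁`: the multiplier `1 + |2πξ|^{2d}`
has an integrable reciprocal on `ℝ^d`. -/
lemma exists_integral_norm_fourier_le (d : ℕ) (hd : 0 < d) :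
    ∃ C : ℝ, 0 < C ∧ ∀ f : SchwartzMap (Eu d) ℂ,
      ∫ ξ, ‖FourierTransform.fourier f ξ‖
        ≤ C * ((∫ x, ‖f x‖) + ∫ x, ‖(LapOp d)^[d] (⇑f) x‖) := by
  have hint : Integrable (fun ξ : Eu d => ((1 : ℝ) + ‖ξ‖ ^ 2) ^ (-(2 * d : ℝ) / 2)) :=
    integrable_rpow_neg_one_add_norm_sq (by
      have : (0 : ℝ) < d := by exact_mod_cast hd
      simp only [finrank_euclideanSpace, Fintype.card_fin]; linarith)
  have hC : 0 ≤ ∫ ξ : Eu d, ((1 : ℝ) + ‖ξ‖ ^ 2) ^ (-(2 * d : ℝ) / 2) :=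
    integral_nonneg fun ξ => by positivity
  refine ⟨2 ^ (d - 1) * (∫ ξ : Eu d, ((1 : ℝ) + ‖ξ‖ ^ 2) ^ (-(2 * d : ℝ) / 2)) + 1,
    by positivity, fun f => ?_⟩
  set S : ℝ := (∫ x, ‖f x‖) + ∫ x, ‖(LapOp d)^[d] (⇑f) x‖ with hS
  have hS0 : 0 ≤ S := add_nonneg (integral_nonneg fun _ => norm_nonneg _)
    (integral_nonneg fun _ => norm_nonneg _)
  have hpt : ∀ ξ : Eu d, ‖FourierTransform.fourier f ξ‖
      ≤ 2 ^ (d - 1) * S * ((1 : ℝ) + ‖ξ‖ ^ 2) ^ (-(2 * d : ℝ) / 2) := by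
    intro ξ
    have h1 := norm_fourier_le f ξ
    have h2 := norm_fourier_le ((fun g : SchwartzMap (Eu d) ℂ => Laplacian.laplacian g)^[d] f) ξ
    rw [fourier_laplacian_iterate, ← lapOp_iterate] at h2
    have h3 : (‖ξ‖ ^ 2) ^ d ≤ ((2 * π) ^ 2 * ‖ξ‖ ^ 2) ^ d := by
      gcongr
      have : (1 : ℝ) ≤ (2 * π) ^ 2 := one_le_pow₀ (by linarith [Real.pi_gt_three])
      nlinarith [sq_nonneg ‖ξ‖]
    have h4 : (1 + (‖ξ‖ ^ 2) ^ d) * ‖FourierTransform.fourier f ξ‖ ≤ S := by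
      have := mul_le_mul_of_nonneg_right h3 (norm_nonneg (FourierTransform.fourier f ξ))
      rw [hS]; linarith
    have h5 : (1 + ‖ξ‖ ^ 2) ^ d ≤ 2 ^ (d - 1) * (1 + (‖ξ‖ ^ 2) ^ d) := by
      simpa using add_pow_le (zero_le_one' ℝ) (sq_nonneg ‖ξ‖) d
    have h6 : ((1 : ℝ) + ‖ξ‖ ^ 2) ^ (-(2 * d : ℝ) / 2) = ((1 + ‖ξ‖ ^ 2) ^ d)⁻¹ := by
      rw [show -(2 * d : ℝ) / 2 = -(d : ℝ) by ring, Real.rpow_neg (by positivity),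
        Real.rpow_natCast]
    rw [h6, ← div_eq_mul_inv, le_div_iff₀ (by positivity)]
    calc _ ≤ ‖FourierTransform.fourier f ξ‖ * (2 ^ (d - 1) * (1 + (‖ξ‖ ^ 2) ^ d)) := by gcongr
      _ = 2 ^ (d - 1) * ((1 + (‖ξ‖ ^ 2) ^ d) * ‖FourierTransform.fourier f ξ‖) := by ring
      _ ≤ _ := by gcongr
  calc _ ≤ ∫ ξ : Eu d, 2 ^ (d - 1) * S * ((1 : ℝ) + ‖ξ‖ ^ 2) ^ (-(2 * d : ℝ) / 2) :=
        integral_mono (FourierTransform.fourier f).integrable.norm (hint.const_mul _) hpt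
    _ = 2 ^ (d - 1) * (∫ ξ : Eu d, ((1 : ℝ) + ‖ξ‖ ^ 2) ^ (-(2 * d : ℝ) / 2)) * S := by
        rw [integral_const_mul]; ring
    _ ≤ _ := by rw [add_mul]; linarith

/-! ### The dispersive estimate -/

/-- The Fourier transform of the anisotropic Gaussian `exp (-∑ bᵢ xᵢ²)` is uniformly bounded by a
quantity depending on the `bᵢ` only through a lower bound for `|bᵢ|`, not for `Re bᵢ`. -/
lemma norm_fourier_gaussian_le {d : ℕ} (b : Fin d → ℂ) (hb : ∀ i, 0 < (b i).re) {t : ℝ}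
    (ht : 0 < t) (hbt : ∀ i, t ≤ ‖b i‖) (w : Eu d) :
    ‖FourierTransform.fourier (fun x : Eu d => Complex.exp (-∑ i, b i * (x i : ℂ) ^ 2)) w‖
      ≤ (√(π / t)) ^ d := by
  have key : FourierTransform.fourier
      (fun x : Eu d => Complex.exp (-∑ i, b i * (x i : ℂ) ^ 2)) w
      = ∏ i, (π / b i) ^ (1 / 2 : ℂ)
          * Complex.exp ((-2 * π * Complex.I * w i) ^ 2 / (4 * b i)) := by
    rw [← GaussianFourier.integral_cexp_neg_sum_mul_add hb, Real.fourier_eq',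
      ← (PiLp.volume_preserving_toLp (Fin d)).integral_comp
        (MeasurableEquiv.toLp 2 _).measurableEmbedding]
    congr 1
    ext v
    rw [smul_eq_mul, ← Complex.exp_add, add_comm]
    congr 2
    simp only [PiLp.inner_apply, RCLike.inner_apply, conj_trivial]
    push_cast
    simp only [Finset.mul_sum, Finset.sum_mul]
    exact Finset.sum_congr rfl fun i _ => by ring
  rw [key, norm_prod]
  calc _ ≤ ∏ i : Fin d, √(π / t) := by
        refine Finset.prod_le_prod (fun i _ => norm_nonneg _) fun i _ => ?_
        have hbi : b i ≠ 0 := fun h => by simpa [h] using hb i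
        rw [norm_mul]
        have h1 : ‖((π : ℂ) / b i) ^ (1 / 2 : ℂ)‖ ≤ √(π / t) := by
          rw [show (1 / 2 : ℂ) = ((1 / 2 : ℝ) : ℂ) by push_cast; rfl,
            Complex.norm_cpow_real, Real.sqrt_eq_rpow]
          gcongr
          rw [norm_div, Complex.norm_real, Real.norm_of_nonneg Real.pi_pos.le]
          have := hbt i
          gcongr
        have h2 : ‖Complex.exp ((-2 * π * Complex.I * w i) ^ 2 / (4 * b i))‖ ≤ 1 := by
          rw [Complex.norm_exp, Real.exp_le_one_iff]
          have e : (-2 * π * Complex.I * w i) ^ 2 / (4 * b i)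
              = ((-(π * w i) ^ 2 : ℝ) : ℂ) * (b i)⁻¹ := by
            push_cast
            field_simp
            ring_nf
            simp
          rw [e, Complex.re_ofReal_mul, Complex.inv_re]
          have : 0 ≤ (b i).re / Complex.normSq (b i) :=
            div_nonneg (hb i).le (Complex.normSq_nonneg _)
          nlinarith [sq_nonneg (π * w i)]
        calc _ ≤ √(π / t) * 1 := by gcongr
          _ = _ := mul_one _
    _ = _ := by simp

lemma integral_norm_fourierInv {d : ℕ} (f : SchwartzMap (Eu d) ℂ) :
    ∫ ξ, ‖FourierTransformInv.fourierInv f ξ‖ = ∫ ξ, ‖FourierTransform.fourier f ξ‖ := by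
  rw [← integral_neg_eq_self (fun ξ => ‖FourierTransform.fourier f ξ‖)]
  congr 1

lemma integrable_gaussian {d : ℕ} (b : Fin d → ℂ) (hb : ∀ i, 0 < (b i).re) :
    Integrable (fun x : Eu d => Complex.exp (-∑ i, b i * (x i : ℂ) ^ 2)) := by
  rw [← (PiLp.volume_preserving_toLp (Fin d)).integrable_comp_emb
    (MeasurableEquiv.toLp 2 _).measurableEmbedding]
  simpa [Function.comp_def] using! GaussianFourier.integrable_cexp_neg_sum_mul_add hb (fun _ => 0)

/-- Moving the Fourier transform from `f = 𝓕 (𝓕⁻ f)` onto the Gaussian. -/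
lemma norm_integral_mul_gaussian_le {d : ℕ} (b : Fin d → ℂ) (hb : ∀ i, 0 < (b i).re) {t : ℝ}
    (ht : 0 < t) (hbt : ∀ i, t ≤ ‖b i‖) (f : SchwartzMap (Eu d) ℂ) :
    ‖∫ x, f x * Complex.exp (-∑ i, b i * (x i : ℂ) ^ 2)‖
      ≤ (√(π / t)) ^ d * ∫ ξ, ‖FourierTransform.fourier f ξ‖ := by
  set g : SchwartzMap (Eu d) ℂ := FourierTransformInv.fourierInv f with hg
  have hfg : f = FourierTransform.fourier g := (FourierTransform.fourier_fourierInv_eq f).symm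
  have hself : ∫ x, f x * Complex.exp (-∑ i, b i * (x i : ℂ) ^ 2)
      = ∫ ξ, g ξ * FourierTransform.fourier
          (fun x : Eu d => Complex.exp (-∑ i, b i * (x i : ℂ) ^ 2)) ξ := by
    conv_lhs => rw [hfg]
    simpa using! VectorFourier.integral_fourierIntegral_smul_eq_flip (L := innerₗ (Eu d))
      Real.continuous_fourierChar continuous_inner g.integrable (integrable_gaussian b hb)
  rw [hself, ← integral_norm_fourierInv, ← integral_const_mul]
  refine norm_integral_le_of_norm_le (g.integrable.norm.const_mul _) (Eventually.of_forall ?_)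
  intro ξ
  rw [norm_mul, mul_comm]
  gcongr
  exact norm_fourier_gaussian_le b hb ht hbt ξ

/-- Dispersive estimate for the quadratic phase `t ∑ σᵢ xᵢ²`, obtained by letting `δ → 0⁺` in the
Gaussian bound with `bᵢ = δ + i t σᵢ`. -/
lemma norm_integral_mul_phase_le {d : ℕ} (σ : Fin d → ℝ) (hσ : ∀ i, |σ i| = 1) {t : ℝ}
    (ht : 0 < t) (f : SchwartzMap (Eu d) ℂ) :
    ‖∫ x, f x * Complex.exp (-(t * Complex.I * ((∑ i, σ i * x i ^ 2 : ℝ) : ℂ)))‖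
      ≤ (√(π / t)) ^ d * ∫ ξ, ‖FourierTransform.fourier f ξ‖ := by
  have hlim : Tendsto (fun δ : ℝ => ∫ x : Eu d, f x * Complex.exp
      (-∑ i, ((δ : ℂ) + t * Complex.I * σ i) * (x i : ℂ) ^ 2)) (𝓝[>] 0)
      (𝓝 (∫ x, f x * Complex.exp (-(t * Complex.I * ((∑ i, σ i * x i ^ 2 : ℝ) : ℂ))))) := by
    -- The integrands are dominated by `‖f‖` since the real part of the exponent is `-δ‖x‖² ≤ 0`.
    refine tendsto_integral_filter_of_dominated_convergence (fun x => ‖f x‖) ?_ ?_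
      f.integrable.norm ?_
    · refine Eventually.of_forall fun δ => Continuous.aestronglyMeasurable ?_
      exact f.continuous.mul (by fun_prop)
    · filter_upwards [self_mem_nhdsWithin] with δ (hδ : 0 < δ)
      refine Eventually.of_forall fun x => ?_
      rw [norm_mul, Complex.norm_exp]
      refine mul_le_of_le_one_right (norm_nonneg _) (Real.exp_le_one_iff.2 ?_)
      rw [Complex.neg_re, Complex.re_sum, neg_nonpos]
      refine Finset.sum_nonneg fun i _ => ?_
      rw [← Complex.ofReal_pow, Complex.re_mul_ofReal]
      have : ((δ : ℂ) + t * Complex.I * σ i).re = δ := by simp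
      rw [this]
      positivity
    · refine Eventually.of_forall fun x => ?_
      have hc : Continuous fun δ : ℝ => f x * Complex.exp
          (-∑ i, ((δ : ℂ) + t * Complex.I * σ i) * (x i : ℂ) ^ 2) := by fun_prop
      have h0 := (hc.tendsto 0).mono_left (nhdsWithin_le_nhds (s := Ioi 0))
      convert h0 using 4
      push_cast
      rw [Finset.mul_sum]
      congr 1
      exact Finset.sum_congr rfl fun i _ => by ring
  refine le_of_tendsto hlim.norm ?_
  filter_upwards [self_mem_nhdsWithin] with δ (hδ : 0 < δ)
  refine norm_integral_mul_gaussian_le _ (fun i => by simpa using hδ) ht (fun i => ?_) f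
  have h : ((δ : ℂ) + t * Complex.I * σ i).im = t * σ i := by simp
  have := Complex.abs_im_le_norm ((δ : ℂ) + t * Complex.I * σ i)
  rwa [h, abs_mul, hσ, mul_one, abs_of_pos ht] at this

/-! ### Laplace-transform representation of the complex power -/

lemma integrable_pow_mul_exp (k : ℕ) {r : ℂ} (hr : 0 < r.re) :
    IntegrableOn (fun t : ℝ => (t : ℂ) ^ k * Complex.exp (-(r * t))) (Ioi 0) := by
  have h := integrableOn_rpow_mul_exp_neg_mul_rpow (p := 1) (s := k) (b := r.re)
    (by
        have : (0 : ℝ) ≤ k := k.cast_nonneg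
        linarith) one_pos hr
  refine (h.mono' (Continuous.aestronglyMeasurable (by fun_prop)) ?_)
  filter_upwards [ae_restrict_mem measurableSet_Ioi] with t (ht : 0 < t)
  rw [norm_mul, norm_pow, Complex.norm_real, Real.norm_of_nonneg ht.le, Complex.norm_exp,
    Complex.neg_re, Complex.re_mul_ofReal, Real.rpow_one, Real.rpow_natCast, neg_mul]

/-- The Gamma integral `∫₀^∞ t^k e^{-rt} dt = k! / r^{k+1}` for complex `r` with `Re r > 0`,
by integration by parts in `k`. -/
lemma integral_pow_mul_exp (k : ℕ) {r : ℂ} (hr : 0 < r.re) :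
    ∫ t : ℝ in Ioi 0, (t : ℂ) ^ k * Complex.exp (-(r * t)) = k.factorial / r ^ (k + 1) := by
  have hr0 : r ≠ 0 := fun h => by simp [h] at hr
  have hd : ∀ t : ℝ, HasDerivAt (fun t : ℝ => Complex.exp (-(r * t)))
      (-r * Complex.exp (-(r * t))) t := fun t => by
    have h1 : HasDerivAt (fun z : ℂ => Complex.exp (-(r * z)))
        (-r * Complex.exp (-(r * t))) (t : ℂ) := by
      simpa [mul_comm] using (((hasDerivAt_id (t : ℂ)).const_mul r).neg).cexp
    exact h1.comp_ofReal
  have hlim : ∀ j : ℕ, Tendsto (fun t : ℝ => (t : ℂ) ^ j * Complex.exp (-(r * t))) atTop (𝓝 0) := by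
    intro j
    rw [tendsto_zero_iff_norm_tendsto_zero]
    refine (tendsto_rpow_mul_exp_neg_mul_atTop_nhds_zero j r.re hr).congr' ?_
    filter_upwards [eventually_gt_atTop 0] with t ht
    rw [norm_mul, norm_pow, Complex.norm_real, Real.norm_of_nonneg ht.le, Complex.norm_exp,
      Complex.neg_re, Complex.re_mul_ofReal, Real.rpow_natCast, neg_mul]
  induction k with
  | zero =>
    have h := integral_Ioi_of_hasDerivAt_of_tendsto' (a := 0) (m := 0)
      (fun t _ => hd t) ?_ (by simpa using hlim 0)
    · rw [integral_const_mul] at h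
      simp only [pow_zero, one_mul, Complex.ofReal_zero, mul_zero, neg_zero, Complex.exp_zero,
        Nat.factorial_zero, Nat.cast_one, zero_add, pow_one] at h ⊢
      field_simp
      linear_combination -h
    · simpa using! (integrable_pow_mul_exp 0 hr).const_mul (-r)
  | succ k ih =>
    have hi1 := (integrable_pow_mul_exp k hr).const_mul ((k : ℂ) + 1)
    have hi2 := (integrable_pow_mul_exp (k + 1) hr).const_mul (-r)
    have h := integral_Ioi_of_hasDerivAt_of_tendsto' (a := 0) (m := 0)
      (f := fun t : ℝ => (t : ℂ) ^ (k + 1) * Complex.exp (-(r * t)))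
      (f' := fun t : ℝ => ((k : ℂ) + 1) * ((t : ℂ) ^ k * Complex.exp (-(r * t)))
        + -r * ((t : ℂ) ^ (k + 1) * Complex.exp (-(r * t))))
      (fun t _ => ?_) (hi1.add hi2) (hlim (k + 1))
    · rw [integral_add hi1 hi2, integral_const_mul, integral_const_mul, ih] at h
      simp only [Complex.ofReal_zero, ne_eq, Nat.add_eq_zero_iff, one_ne_zero, and_false,
        not_false_eq_true, zero_pow, zero_mul, sub_zero] at h
      have h' : r * ∫ t : ℝ in Ioi 0, (t : ℂ) ^ (k + 1) * Complex.exp (-(r * t))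
          = (k + 1) * (k.factorial / r ^ (k + 1)) := by linear_combination -h
      rw [eq_div_iff (by positivity), Nat.factorial_succ]
      field_simp at h'
      push_cast
      linear_combination h'
    · have hp : HasDerivAt (fun t : ℝ => (t : ℂ) ^ (k + 1)) ((k + 1) * (t : ℂ) ^ k) t := by
        have := (hasDerivAt_pow (k + 1) (t : ℂ)).comp_ofReal
        simpa using this
      exact (hp.mul (hd t)).congr_deriv (by ring)

/-- `P` is a diagonal quadratic form with coefficients `±1`; only this enters the dispersive
estimate. -/
lemma exists_signature (n : ℕ) : ∃ σ : Fin (2 * n) → ℝ, (∀ i, |σ i| = 1) ∧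
    ∀ x : Eu (2 * n), Pq n x = ∑ i, σ i * x i ^ 2 := by
  refine ⟨fun i => if (i : ℕ) < n then 1 else -1, fun i => by dsimp only; split_ifs <;> simp, fun x => ?_⟩
  rw [← (finCongr (two_mul n).symm).sum_comp, Fin.sum_univ_add, ← Finset.sum_add_distrib, Pq]
  refine Finset.sum_congr rfl fun j _ => ?_
  simp only [finCongr_apply, Fin.val_cast, Fin.val_castAdd, Fin.val_natAdd, j.isLt, if_true,
    not_lt.2 (Nat.le_add_right n j.1), if_false, one_mul, neg_one_mul, sub_eq_add_neg]
  rfl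

/-- Since `P - iε = -i (ε + iP)` and `Re (ε + iP) = ε > 0`, the Gamma integral writes
`(P - iε)^{-(k+1)}` as a Laplace transform in `t`; Fubini then moves the `x`-integral inside. -/
lemma integral_mul_inv_pow_eq {d : ℕ} (k : ℕ) (P : Eu d → ℝ) (hP : Continuous P)
    (f : SchwartzMap (Eu d) ℂ) {ε : ℝ} (hε : 0 < ε) :
    Integrable (fun t : ℝ => (t : ℂ) ^ k * Complex.exp (-(ε * t)) *
        ∫ x, f x * Complex.exp (-(t * Complex.I * P x))) (volume.restrict (Ioi 0)) ∧
    ∫ x, f x * (((P x : ℂ) - ε * Complex.I) ^ (k + 1))⁻¹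
      = ((-Complex.I) ^ (k + 1))⁻¹ * (k.factorial : ℂ)⁻¹ * ∫ t : ℝ in Ioi 0,
        (t : ℂ) ^ k * Complex.exp (-(ε * t)) *
          ∫ x, f x * Complex.exp (-(t * Complex.I * P x)) := by
  have hint : Integrable (fun p : Eu d × ℝ => f p.1 * ((p.2 : ℂ) ^ k *
      Complex.exp (-((ε + Complex.I * P p.1) * p.2))))
      (volume.prod (volume.restrict (Ioi 0))) := by
    have h0 := f.integrable.mul_prod (μ := (volume : Measure (Eu d)))
      (integrable_pow_mul_exp k (r := ε) (by simpa using hε))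
    refine h0.mono (Continuous.aestronglyMeasurable ?_) (Eventually.of_forall fun p => ?_)
    · exact (f.continuous.comp continuous_fst).mul (by fun_prop)
    · simp only [norm_mul, Complex.norm_exp]
      simp
  have hswap := integral_integral_swap (f := fun (x : Eu d) (t : ℝ) => f x * ((t : ℂ) ^ k *
      Complex.exp (-((ε + Complex.I * P x) * t)))) hint
  have hpt : ∀ t : ℝ, (∫ x : Eu d, f x * ((t : ℂ) ^ k *
      Complex.exp (-((ε + Complex.I * P x) * t)))) = (t : ℂ) ^ k * Complex.exp (-(ε * t)) *
          ∫ x, f x * Complex.exp (-(t * Complex.I * P x)) := by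
    intro t
    rw [← integral_const_mul]
    congr 1
    ext x
    rw [show -((ε + Complex.I * P x) * t) = -(ε * t) + -(t * Complex.I * P x) by ring,
      Complex.exp_add]
    ring
  refine ⟨by simpa only [hpt] using! hint.integral_prod_right, ?_⟩
  simp only [hpt] at hswap
  rw [← hswap, ← integral_const_mul]
  congr 1
  ext x
  have hre : 0 < ((ε : ℂ) + Complex.I * P x).re := by simpa using hε
  have hne : (ε : ℂ) + Complex.I * P x ≠ 0 := fun h => by simp [h] at hre
  rw [integral_const_mul, integral_pow_mul_exp k hre,
    show (P x : ℂ) - ε * Complex.I = -Complex.I * (ε + Complex.I * P x) by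
      linear_combination (P x : ℂ) * Complex.I_mul_I]
  have hk : (k.factorial : ℂ) ≠ 0 := by exact_mod_cast k.factorial_ne_zero
  rw [mul_pow, mul_inv]
  field_simp

/-! ### The uniform bound -/

theorem stmt7 (n : ℕ) (hn : 2 ≤ n) :
    ∃ (ℓ : ℕ) (C : ℝ), 0 < C ∧
      ∀ ψ : SchwartzMap (Eu (2*n)) ℂ, ∀ ε : ℝ, 0 < ε →
        ‖∫ x : Eu (2*n), ψ x * ((((Pq n x : ℝ) : ℂ) - ε * Complex.I)^(n-1))⁻¹‖
          ≤ C * ((∫ x : Eu (2*n), ‖ψ x‖) + ∫ x : Eu (2*n), ‖(LapOp (2*n))^[ℓ] (⇑ψ) x‖) := by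
  obtain ⟨C, hC, hF⟩ := exists_integral_norm_fourier_le (2 * n) (by omega)
  obtain ⟨σ, hσ, hPσ⟩ := exists_signature n
  have hPc : Continuous (Pq n) := by
    rw [show Pq n = fun x : Eu (2 * n) => ∑ i, σ i * x i ^ 2 from funext hPσ]
    fun_prop
  refine ⟨2 * n, 1 + π ^ n * C, by positivity, fun ψ ε hε => ?_⟩
  obtain ⟨k, rfl⟩ : ∃ k, n = k + 2 := ⟨n - 2, by omega⟩
  obtain ⟨hint, heq⟩ := integral_mul_inv_pow_eq k _ hPc ψ hε
  rw [show k + 2 - 1 = k + 1 from rfl, heq]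
  set J : ℝ → ℂ := fun t => ∫ x, ψ x * Complex.exp (-(t * Complex.I * Pq (k + 2) x)) with hJ
  set N₁ : ℝ := ∫ x, ‖ψ x‖ with hN₁
  set N₂ : ℝ := ∫ ξ, ‖FourierTransform.fourier ψ ξ‖ with hN₂
  have hN₁0 : 0 ≤ N₁ := integral_nonneg fun _ => norm_nonneg _
  have hJ1 : ∀ t : ℝ, ‖J t‖ ≤ N₁ := fun t => by
    refine norm_integral_le_of_norm_le ψ.integrable.norm (Eventually.of_forall fun x => ?_)
    rw [norm_mul, Complex.norm_exp]
    simp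
  have hJ2 : ∀ t : ℝ, 0 < t → ‖J t‖ ≤ (π / t) ^ (k + 2) * N₂ := fun t ht => by
    have h := norm_integral_mul_phase_le σ hσ ht ψ
    rw [pow_mul, Real.sq_sqrt (by positivity)] at h
    simpa only [← hPσ] using h
  have hw : ∀ t : ℝ, 0 < t → ‖(t : ℂ) ^ k * Complex.exp (-(ε * t)) * J t‖ ≤ t ^ k * ‖J t‖ := by
    intro t ht
    rw [norm_mul, norm_mul, norm_pow, Complex.norm_real, Real.norm_of_nonneg ht.le,
      Complex.norm_exp]
    gcongr
    refine mul_le_of_le_one_right (by positivity) (Real.exp_le_one_iff.2 ?_)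
    simpa using (mul_pos hε ht).le
  -- On `(0, 1]` the `L¹` bound suffices; on `(1, ∞)` the decay `t^{-(k+2)}` leaves `t^{-2}`.
  have hA : ‖∫ t : ℝ in Ioc 0 1, (t : ℂ) ^ k * Complex.exp (-(ε * t)) * J t‖ ≤ N₁ := by
    have := norm_setIntegral_le_of_norm_le_const (μ := volume) (s := Ioc (0 : ℝ) 1) (C := N₁)
      (f := fun t : ℝ => (t : ℂ) ^ k * Complex.exp (-(ε * t)) * J t) (by simp) (fun t ht => ?_)
    · simpa using this
    · refine (hw t ht.1).trans ((mul_le_mul (pow_le_one₀ ht.1.le ht.2) (hJ1 t)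
        (norm_nonneg _) zero_le_one).trans (one_mul _).le)
  have hB : ‖∫ t : ℝ in Ioi 1, (t : ℂ) ^ k * Complex.exp (-(ε * t)) * J t‖
      ≤ π ^ (k + 2) * N₂ := by
    have hi : IntegrableOn (fun t : ℝ => π ^ (k + 2) * N₂ * t ^ (-2 : ℝ)) (Ioi 1) :=
      (integrableOn_Ioi_rpow_of_lt (by norm_num) one_pos).const_mul _
    have := norm_integral_le_of_norm_le (μ := volume.restrict (Ioi 1)) hi
      (f := fun t : ℝ => (t : ℂ) ^ k * Complex.exp (-(ε * t)) * J t) ?_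
    · rw [integral_const_mul, integral_Ioi_rpow_of_lt (by norm_num) one_pos] at this
      norm_num at this
      exact this
    · filter_upwards [ae_restrict_mem measurableSet_Ioi] with t (ht : 1 < t)
      have ht0 : 0 < t := one_pos.trans ht
      refine (hw t ht0).trans ((mul_le_mul_of_nonneg_left (hJ2 t ht0) (by positivity)).trans ?_)
      rw [Real.rpow_neg ht0.le, Real.rpow_two, div_pow]
      refine le_of_eq ?_
      field_simp
      ring
  have hsplit : ∫ t : ℝ in Ioi 0, (t : ℂ) ^ k * Complex.exp (-(ε * t)) * J t
      = (∫ t : ℝ in Ioc 0 1, (t : ℂ) ^ k * Complex.exp (-(ε * t)) * J t)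
        + ∫ t : ℝ in Ioi 1, (t : ℂ) ^ k * Complex.exp (-(ε * t)) * J t := by
    have hint' : IntegrableOn (fun t : ℝ => (t : ℂ) ^ k * Complex.exp (-(ε * t)) * J t)
      (Ioi 0) := hint
    rw [← setIntegral_union (Ioc_disjoint_Ioi le_rfl) measurableSet_Ioi
      (hint'.mono_set Ioc_subset_Ioi_self) (hint'.mono_set (Ioi_subset_Ioi zero_le_one)),
      Ioc_union_Ioi_eq_Ioi zero_le_one]
  have hconst : ‖((-Complex.I) ^ (k + 1))⁻¹ * (k.factorial : ℂ)⁻¹‖ ≤ 1 := by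
    rw [norm_mul, norm_inv, norm_pow, norm_neg, Complex.norm_I, one_pow, inv_one, one_mul,
      norm_inv, Complex.norm_natCast]
    exact inv_le_one_of_one_le₀ (by exact_mod_cast k.factorial_pos)
  have hN₂' := hF ψ
  set N₃ : ℝ := ∫ x, ‖(LapOp (2 * (k + 2)))^[2 * (k + 2)] (⇑ψ) x‖ with hN₃
  have hN₃0 : 0 ≤ N₃ := integral_nonneg fun _ => norm_nonneg _
  calc _ ≤ 1 * (N₁ + π ^ (k + 2) * N₂) := by
        rw [norm_mul, hsplit]
        gcongr
        exact (norm_add_le _ _).trans (add_le_add hA hB)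
    _ ≤ 1 * ((N₁ + N₃) + π ^ (k + 2) * (C * (N₁ + N₃))) := by
        gcongr
        linarith
    _ = _ := by ring
end
end
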